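/- arXiv:1010.0226 — 6 statements merged into one kernel-verified Lean document; each statement's English description precedes it below -/
import Mathlib

section
/- Equivocation converse of the side-information characterization: if (D, E) is an achievable utility–privacy pair, then E ≤ Γ(D), where Γ(D) is the supremum of H(X_h | U, Z) over all D-admissible single-letter choices (p(u | x_r, x_h), g). -/
open scoped BigOperators

/-- A function `p : α → ℝ` on a finite alphabet is a probability mass function. -/
def IsPMF {α : Type} [Fintype α] (p : α → ℝ) : Prop :=
  (∀ a, 0 ≤ p a) ∧ ∑ a, p a = 1

/-- Shannon entropy (base-2) of a pmf on a finite alphabet, with the convention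
`0 · log 0 = 0` (automatic since `Real.logb 2 0 = 0`). -/
noncomputable def H2 {α : Type} [Fintype α] (p : α → ℝ) : ℝ :=
  -∑ a, p a * Real.logb 2 (p a)

/-- Conditional Shannon entropy `H(A | B)` computed from a joint pmf on `α × β`
(first coordinate the variable, second the conditioning variable):
`H(A | B) = H(A, B) - H(B)`. -/
noncomputable def condH2 {α β : Type} [Fintype α] [Fintype β] (p : α × β → ℝ) : ℝ :=
  H2 p - H2 (fun b => ∑ a, p (a, b))

/-- Mutual information `I(A ; B)` computed from a joint pmf on `α × β`:
`I(A ; B) = H(A) + H(B) - H(A, B)`. -/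
noncomputable def MI2 {α β : Type} [Fintype α] [Fintype β] (p : α × β → ℝ) : ℝ :=
  H2 (fun a => ∑ b, p (a, b)) + H2 (fun b => ∑ a, p (a, b)) - H2 p

/-- Average per-letter distortion of an `(n, M)` code. -/
noncomputable def codeDistortion {Xr Xh Z Xhat : Type}
    [Fintype Xr] [Fintype Xh] [Fintype Z] [Fintype Xhat]
    (p : Xr × Xh × Z → ℝ) (d : Xr × Xhat → ℝ) (n M : ℕ)
    (enc : (Fin n → Xr × Xh) → Fin M)
    (dec : Fin M × (Fin n → Z) → Fin n → Xhat) : ℝ :=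
  ∑ s : Fin n → Xr × Xh × Z,
    (∏ i, p (s i)) *
      ((n : ℝ)⁻¹ * ∑ i, d ((s i).1,
        dec (enc fun j => ((s j).1, (s j).2.1), fun j => (s j).2.2) i))

/-- Equivocation `(1/n) H(X_h^n | W, Z^n)` of an `(n, M)` code. -/
noncomputable def codeEquivocation {Xr Xh Z : Type}
    [Fintype Xr] [Fintype Xh] [Fintype Z]
    (p : Xr × Xh × Z → ℝ) (n M : ℕ)
    (enc : (Fin n → Xr × Xh) → Fin M) : ℝ :=
  (n : ℝ)⁻¹ * condH2 (fun q : (Fin n → Xh) × (Fin M × (Fin n → Z)) =>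
    ∑ xr : Fin n → Xr,
      if enc (fun i => (xr i, q.1 i)) = q.2.1 then ∏ i, p (xr i, q.1 i, q.2.2 i) else 0)

/-- `(D, E)` is an achievable utility–privacy pair. -/
def AchievablePair {Xr Xh Z Xhat : Type}
    [Fintype Xr] [Fintype Xh] [Fintype Z] [Fintype Xhat]
    (p : Xr × Xh × Z → ℝ) (d : Xr × Xhat → ℝ) (D E : ℝ) : Prop :=
  ∀ ε > 0, ∃ (n M : ℕ) (enc : (Fin n → Xr × Xh) → Fin M)
      (dec : Fin M × (Fin n → Z) → Fin n → Xhat),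
    0 < n ∧ 0 < M ∧
    codeDistortion p d n M enc dec ≤ D + ε ∧
    E - ε ≤ codeEquivocation p n M enc

/-- `(R, D, E)` is an achievable rate–distortion–equivocation triple. -/
def AchievableTriple {Xr Xh Z Xhat : Type}
    [Fintype Xr] [Fintype Xh] [Fintype Z] [Fintype Xhat]
    (p : Xr × Xh × Z → ℝ) (d : Xr × Xhat → ℝ) (R D E : ℝ) : Prop :=
  ∀ ε > 0, ∃ (n M : ℕ) (enc : (Fin n → Xr × Xh) → Fin M)
      (dec : Fin M × (Fin n → Z) → Fin n → Xhat),
    0 < n ∧ 0 < M ∧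
    (M : ℝ) ≤ (2 : ℝ) ^ ((n : ℝ) * (R + ε)) ∧
    codeDistortion p d n M enc dec ≤ D + ε ∧
    E - ε ≤ codeEquivocation p n M enc

/-- Single-letter expected distortion `E[d(X_r, g(U, Z))]` under the joint law
`p(x_r, x_h, z) p(u | x_r, x_h)` (so that `U — (X_r, X_h) — Z` is a Markov chain). -/
noncomputable def slDistortion {Xr Xh Z Xhat U : Type}
    [Fintype Xr] [Fintype Xh] [Fintype Z] [Fintype Xhat] [Fintype U]
    (p : Xr × Xh × Z → ℝ) (d : Xr × Xhat → ℝ)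
    (pu : Xr × Xh → U → ℝ) (g : U × Z → Xhat) : ℝ :=
  ∑ x : Xr × Xh × Z, ∑ u : U, p x * pu (x.1, x.2.1) u * d (x.1, g (u, x.2.2))

/-- Single-letter equivocation `H(X_h | U, Z)` under the joint law
`p(x_r, x_h, z) p(u | x_r, x_h)`. -/
noncomputable def slEquivocation {Xr Xh Z U : Type}
    [Fintype Xr] [Fintype Xh] [Fintype Z] [Fintype U]
    (p : Xr × Xh × Z → ℝ) (pu : Xr × Xh → U → ℝ) : ℝ :=
  condH2 (fun q : Xh × (U × Z) =>
    ∑ xr : Xr, p (xr, q.1, q.2.2) * pu (xr, q.1) q.2.1)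

/-- Single-letter rate `I(X_r, X_h ; U) - I(Z ; U)` under the joint law
`p(x_r, x_h, z) p(u | x_r, x_h)`. -/
noncomputable def slRate {Xr Xh Z U : Type}
    [Fintype Xr] [Fintype Xh] [Fintype Z] [Fintype U]
    (p : Xr × Xh × Z → ℝ) (pu : Xr × Xh → U → ℝ) : ℝ :=
  MI2 (fun q : (Xr × Xh) × U => (∑ z, p (q.1.1, q.1.2, z)) * pu q.1 q.2) -
    MI2 (fun q : Z × U => ∑ xr : Xr, ∑ xh : Xh, p (xr, xh, q.1) * pu (xr, xh) q.2)

/-- `Γ(D)`: supremum of `H(X_h | U, Z)` over all `D`-admissible single-letter choices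
`(p(u | x_r, x_h), g)`; since the auxiliary alphabet is finite it may be taken to be
`Fin k` for some `k`. -/
noncomputable def Gamma {Xr Xh Z Xhat : Type}
    [Fintype Xr] [Fintype Xh] [Fintype Z] [Fintype Xhat]
    (p : Xr × Xh × Z → ℝ) (d : Xr × Xhat → ℝ) (D : ℝ) : ℝ :=
  sSup { e : ℝ | ∃ (k : ℕ) (pu : Xr × Xh → Fin k → ℝ) (g : Fin k × Z → Xhat),
    (∀ a, IsPMF (pu a)) ∧ slDistortion p d pu g ≤ D ∧ e = slEquivocation p pu }

/-- `R(D, E)`: infimum of `I(X_r, X_h ; U) - I(Z ; U)` over all `(D, E)`-admissible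
single-letter choices `(p(u | x_r, x_h), g)`. -/
noncomputable def RDE {Xr Xh Z Xhat : Type}
    [Fintype Xr] [Fintype Xh] [Fintype Z] [Fintype Xhat]
    (p : Xr × Xh × Z → ℝ) (d : Xr × Xhat → ℝ) (D E : ℝ) : ℝ :=
  sInf { r : ℝ | ∃ (k : ℕ) (pu : Xr × Xh → Fin k → ℝ) (g : Fin k × Z → Xhat),
    (∀ a, IsPMF (pu a)) ∧ slDistortion p d pu g ≤ D ∧
    E ≤ slEquivocation p pu ∧ r = slRate p pu }

open Classical in
/-- Conditional entropy as an expected log-likelihood. -/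
lemma condH2_eq_aux {α β : Type} [Fintype α] [Fintype β] (P : α × β → ℝ) (h0 : ∀ x, 0 ≤ P x) :
    condH2 P = -∑ x, P x * Real.logb 2 (P x / ∑ a, P (a, x.2)) := by
  have e : ∀ x : α × β, P x * Real.logb 2 (P x / ∑ a, P (a, x.2))
      = P x * Real.logb 2 (P x) - P x * Real.logb 2 (∑ a, P (a, x.2)) := by
    intro x
    by_cases hx : P x = 0
    · simp [hx]
    · have hpos : 0 < P x := lt_of_le_of_ne (h0 x) (Ne.symm hx)
      have h2 : P x ≤ ∑ a, P (a, x.2) :=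
        Finset.single_le_sum (f := fun a => P (a, x.2)) (fun a _ => h0 _) (Finset.mem_univ x.1)
      rw [Real.logb_div hx (by linarith : (0:ℝ) < _).ne']
      ring
  have e2 : ∑ x : α × β, P x * Real.logb 2 (∑ a, P (a, x.2))
      = ∑ b, (∑ a, P (a, b)) * Real.logb 2 (∑ a, P (a, b)) := by
    rw [Fintype.sum_prod_type_right]
    exact Finset.sum_congr rfl fun b _ => by rw [Finset.sum_mul]
  rw [Finset.sum_congr rfl fun x _ => e x, Finset.sum_sub_distrib, e2]
  unfold condH2 H2
  ring

/-- Gibbs' inequality for conditional entropy. -/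
lemma gibbs_aux {α β : Type} [Fintype α] [Fintype β] (P : α × β → ℝ) (h0 : ∀ x, 0 ≤ P x)
    (Q : α × β → ℝ) (hQ0 : ∀ x, 0 ≤ Q x) (hQ1 : ∀ b, ∑ a, Q (a, b) ≤ 1)
    (hac : ∀ x, P x ≠ 0 → Q x ≠ 0) :
    condH2 P ≤ -∑ x, P x * Real.logb 2 (Q x) := by
  rw [condH2_eq_aux P h0]
  have hl2 : 0 < Real.log 2 := Real.log_pos (by norm_num)
  have key : ∀ x : α × β, P x * Real.logb 2 (Q x) - P x * Real.logb 2 (P x / ∑ a, P (a, x.2))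
      ≤ (Q x * (∑ a, P (a, x.2)) - P x) / Real.log 2 := by
    intro x
    have h2 : P x ≤ ∑ a, P (a, x.2) :=
      Finset.single_le_sum (f := fun a => P (a, x.2)) (fun a _ => h0 _) (Finset.mem_univ x.1)
    by_cases hx : P x = 0
    · rw [hx] at h2 ⊢
      have := mul_nonneg (hQ0 x) h2
      simp only [zero_mul, sub_zero]
      positivity
    · have hpos : 0 < P x := lt_of_le_of_ne (h0 x) (Ne.symm hx)
      have hQ : 0 < Q x := lt_of_le_of_ne (hQ0 x) (Ne.symm (hac x hx))
      set S := ∑ a, P (a, x.2)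
      have hS : 0 < S := by linarith
      have h3 := Real.log_le_sub_one_of_pos (show 0 < Q x * S / P x by positivity)
      rw [Real.log_div (by positivity) hx, Real.log_mul hQ.ne' hS.ne'] at h3
      have h4 := mul_le_mul_of_nonneg_left h3 hpos.le
      have h5 : P x * (Q x * S / P x - 1) = Q x * S - P x := by field_simp
      rw [h5] at h4
      unfold Real.logb
      rw [Real.log_div hx hS.ne']
      calc _ = (P x * (Real.log (Q x) + Real.log S - Real.log (P x))) / Real.log 2 := by ring
        _ ≤ _ := by gcongr
  have tot : ∑ x : α × β, (Q x * (∑ a, P (a, x.2)) - P x) / Real.log 2 ≤ 0 := by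
    rw [← Finset.sum_div]
    apply div_nonpos_of_nonpos_of_nonneg _ hl2.le
    rw [Finset.sum_sub_distrib, Fintype.sum_prod_type_right, Fintype.sum_prod_type_right,
      ← Finset.sum_sub_distrib]
    apply Finset.sum_nonpos
    intro b _
    simp only
    rw [← Finset.sum_mul]
    have : 0 ≤ ∑ a, P (a, b) := Finset.sum_nonneg fun a _ => h0 _
    nlinarith [hQ1 b]
  have := Finset.sum_le_sum fun x (_ : x ∈ Finset.univ) => key x
  rw [Finset.sum_sub_distrib] at this
  linarith

lemma prod_update_aux {α : Type} (p : α → ℝ) {n : ℕ} (i : Fin n) (s : Fin n → α) (x : α) :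
    (∏ j, p (Function.update s i x j)) * p (s i) = (∏ j, p (s j)) * p x := by
  rw [← Finset.mul_prod_erase _ _ (Finset.mem_univ i),
    ← Finset.mul_prod_erase _ (fun j => p (s j)) (Finset.mem_univ i)]
  have : ∏ j ∈ Finset.univ.erase i, p (Function.update s i x j)
      = ∏ j ∈ Finset.univ.erase i, p (s j) :=
    Finset.prod_congr rfl fun j hj => by
      rw [Function.update_of_ne (Finset.ne_of_mem_erase hj)]
  rw [this, Function.update_self]
  ring

lemma sum_prod_one_aux {α : Type} [Fintype α] (p : α → ℝ) (hp : IsPMF p) (n : ℕ) :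
    ∑ s : Fin n → α, ∏ j, p (s j) = 1 := by
  rw [← Fintype.piFinset_univ, ← Finset.prod_univ_sum (fun _ => Finset.univ) (fun _ a => p a)]
  simp [hp.2]

/-- Resampling one coordinate of an i.i.d. vector. -/
lemma resample_aux {α : Type} [Fintype α] (p : α → ℝ) (hp : IsPMF p) {n : ℕ} (i : Fin n)
    (F : (Fin n → α) → ℝ) :
    ∑ s : Fin n → α, (∏ j, p (s j)) * F s
      = ∑ x, p x * ∑ s : Fin n → α, (∏ j, p (s j)) * F (Function.update s i x) := by
  let σ : (Fin n → α) × α → (Fin n → α) × α := fun t => (Function.update t.1 i t.2, t.1 i)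
  have hσ : Function.Involutive σ := by
    intro t
    simp [σ]
  have h1 : ∑ s : Fin n → α, (∏ j, p (s j)) * F s
      = ∑ t : (Fin n → α) × α, (∏ j, p (t.1 j)) * p t.2 * F t.1 := by
    rw [Fintype.sum_prod_type]
    refine Finset.sum_congr rfl fun s _ => ?_
    simp only
    rw [← Finset.sum_mul, ← Finset.mul_sum, hp.2, mul_one]
  have h2 : ∑ x, p x * ∑ s : Fin n → α, (∏ j, p (s j)) * F (Function.update s i x)
      = ∑ t : (Fin n → α) × α, (∏ j, p (t.1 j)) * p t.2 * F (σ t).1 := by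
    rw [Fintype.sum_prod_type_right]
    refine Finset.sum_congr rfl fun x _ => ?_
    rw [Finset.mul_sum]
    refine Finset.sum_congr rfl fun s _ => ?_
    simp only [σ]
    ring
  rw [h1, h2, ← Equiv.sum_comp hσ.toPerm]
  refine Finset.sum_congr rfl fun t _ => ?_
  have := prod_update_aux p i t.1 t.2
  simp only [Function.Involutive.coe_toPerm, σ] at *
  rw [this]

/-- The auxiliary letter: the reconstruction of letter `i` as a function of the `i`-th side
information symbol. -/
def auxU {Xr Xh Z Xhat : Type} {n M : ℕ}
    (enc : (Fin n → Xr × Xh) → Fin M) (dec : Fin M × (Fin n → Z) → Fin n → Xhat)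
    (i : Fin n) (s : Fin n → Xr × Xh × Z) : Z → Xhat :=
  fun z => dec (enc fun j => ((s j).1, (s j).2.1), Function.update (fun j => (s j).2.2) i z) i

lemma auxU_indep {Xr Xh Z Xhat : Type} {n M : ℕ}
    (enc : (Fin n → Xr × Xh) → Fin M) (dec : Fin M × (Fin n → Z) → Fin n → Xhat)
    (i : Fin n) (s : Fin n → Xr × Xh × Z) (a : Xr) (b : Xh) (z z' : Z) :
    auxU enc dec i (Function.update s i (a, b, z))
      = auxU enc dec i (Function.update s i (a, b, z')) := by
  funext w
  unfold auxU
  have h1 : (fun j => ((Function.update s i (a, b, z) j).1, (Function.update s i (a, b, z) j).2.1))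
      = fun j => ((Function.update s i (a, b, z') j).1, (Function.update s i (a, b, z') j).2.1) := by
    funext j
    by_cases hj : j = i
    · subst hj; simp
    · simp [Function.update_of_ne hj]
  have h2 : Function.update (fun j => (Function.update s i (a, b, z) j).2.2) i w
      = Function.update (fun j => (Function.update s i (a, b, z') j).2.2) i w := by
    funext j
    by_cases hj : j = i
    · subst hj; simp
    · simp [Function.update_of_ne hj]
  rw [h1, h2]

open Classical in
/-- The single-letter test channel induced by a code. -/
noncomputable def auxK {Xr Xh Z Xhat : Type} [Fintype Xr] [Fintype Xh] [Fintype Z]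
    (p : Xr × Xh × Z → ℝ) {n M : ℕ}
    (enc : (Fin n → Xr × Xh) → Fin M) (dec : Fin M × (Fin n → Z) → Fin n → Xhat)
    (a : Xr × Xh) (u : Z → Xhat) : ℝ :=
  (n : ℝ)⁻¹ * ∑ i, ∑ s : Fin n → Xr × Xh × Z, (∏ j, p (s j)) *
    if auxU enc dec i (Function.update s i (a.1, a.2, (s i).2.2)) = u then 1 else 0

open Classical in
lemma auxK_sum {Xr Xh Z Xhat : Type} [Fintype Xr] [Fintype Xh] [Fintype Z] [Fintype Xhat]
    (p : Xr × Xh × Z → ℝ) {n M : ℕ}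
    (enc : (Fin n → Xr × Xh) → Fin M) (dec : Fin M × (Fin n → Z) → Fin n → Xhat)
    (a : Xr × Xh) (G : (Z → Xhat) → ℝ) :
    ∑ u, auxK p enc dec a u * G u = (n : ℝ)⁻¹ * ∑ i, ∑ s : Fin n → Xr × Xh × Z,
      (∏ j, p (s j)) * G (auxU enc dec i (Function.update s i (a.1, a.2, (s i).2.2))) := by
  unfold auxK
  simp only [mul_assoc, Finset.sum_mul]
  rw [← Finset.mul_sum, Finset.sum_comm]
  congr 1
  refine Finset.sum_congr rfl fun i _ => ?_
  rw [Finset.sum_comm]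
  refine Finset.sum_congr rfl fun s _ => ?_
  rw [← Finset.mul_sum]
  simp

open Classical in
lemma auxK_pmf {Xr Xh Z Xhat : Type} [Fintype Xr] [Fintype Xh] [Fintype Z] [Fintype Xhat]
    (p : Xr × Xh × Z → ℝ) (hp : IsPMF p) {n M : ℕ} (hn : 0 < n)
    (enc : (Fin n → Xr × Xh) → Fin M) (dec : Fin M × (Fin n → Z) → Fin n → Xhat)
    (a : Xr × Xh) : IsPMF (auxK p enc dec a) := by
  constructor
  · intro u
    unfold auxK
    refine mul_nonneg (by positivity) (Finset.sum_nonneg fun i _ => Finset.sum_nonneg fun s _ =>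
      mul_nonneg (Finset.prod_nonneg fun j _ => hp.1 _) ?_)
    split_ifs <;> norm_num
  · have := auxK_sum p enc dec a (fun _ => 1)
    simp only [mul_one] at this
    rw [this]
    simp only [sum_prod_one_aux p hp n]
    have : (n : ℝ) ≠ 0 := by positivity
    simp [this]

open Classical in
lemma transfer_aux {Xr Xh Z Xhat : Type} [Fintype Xr] [Fintype Xh] [Fintype Z] [Fintype Xhat]
    (p : Xr × Xh × Z → ℝ) (hp : IsPMF p) {n M : ℕ}
    (enc : (Fin n → Xr × Xh) → Fin M) (dec : Fin M × (Fin n → Z) → Fin n → Xhat)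
    (F : Xr × Xh × Z → (Z → Xhat) → ℝ) :
    ∑ x : Xr × Xh × Z, ∑ u, p x * auxK p enc dec (x.1, x.2.1) u * F x u
      = (n : ℝ)⁻¹ * ∑ i, ∑ s : Fin n → Xr × Xh × Z,
        (∏ j, p (s j)) * F (s i) (auxU enc dec i s) := by
  have h1 : ∀ i : Fin n, ∑ s : Fin n → Xr × Xh × Z,
        (∏ j, p (s j)) * F (s i) (auxU enc dec i s) = ∑ x, p x * ∑ s : Fin n → Xr × Xh × Z,
        (∏ j, p (s j)) * F x (auxU enc dec i
          (Function.update s i (x.1, x.2.1, (s i).2.2))) := by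
    intro i
    rw [resample_aux p hp i]
    refine Finset.sum_congr rfl fun x _ => ?_
    congr 1
    refine Finset.sum_congr rfl fun s _ => ?_
    rw [Function.update_self, auxU_indep enc dec i s x.1 x.2.1 (s i).2.2 x.2.2]
  simp only [h1]
  conv_rhs => rw [Finset.sum_comm, Finset.mul_sum]
  refine Finset.sum_congr rfl fun x _ => ?_
  simp only [mul_assoc]
  rw [← Finset.mul_sum, auxK_sum p enc dec (x.1, x.2.1) (F x), ← Finset.mul_sum]
  ring

open Classical in
lemma dist_aux {Xr Xh Z Xhat : Type} [Fintype Xr] [Fintype Xh] [Fintype Z] [Fintype Xhat]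
    (p : Xr × Xh × Z → ℝ) (hp : IsPMF p) (d : Xr × Xhat → ℝ) {n M : ℕ}
    (enc : (Fin n → Xr × Xh) → Fin M) (dec : Fin M × (Fin n → Z) → Fin n → Xhat) :
    slDistortion p d (auxK p enc dec) (fun q => q.1 q.2) = codeDistortion p d n M enc dec := by
  unfold slDistortion codeDistortion
  rw [transfer_aux p hp enc dec (fun x u => d (x.1, u x.2.2)), Finset.sum_comm, Finset.mul_sum]
  refine Finset.sum_congr rfl fun s _ => ?_
  rw [← Finset.mul_sum, mul_left_comm]
  simp [auxU]

lemma split_sum_aux {A B C : Type} [Fintype A] [Fintype B] [Fintype C] {n : ℕ}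
    (G : (Fin n → A × B × C) → ℝ) :
    ∑ s, G s = ∑ b : Fin n → B, ∑ c : Fin n → C, ∑ a : Fin n → A, G fun i => (a i, b i, c i) := by
  let e : ((Fin n → B) × (Fin n → C) × (Fin n → A)) ≃ (Fin n → A × B × C) :=
    { toFun := fun t i => (t.2.2 i, t.1 i, t.2.1 i)
      invFun := fun s => (fun i => (s i).2.1, fun i => (s i).2.2, fun i => (s i).1)
      left_inv := fun t => rfl
      right_inv := fun s => rfl }
  rw [← Equiv.sum_comp e, Fintype.sum_prod_type]
  refine Finset.sum_congr rfl fun b _ => ?_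
  rw [Fintype.sum_prod_type]
  rfl

/-- Expectations under the law of `(X_h^n, W, Z^n)`. -/
lemma code_sum_aux {Xr Xh Z : Type} [Fintype Xr] [Fintype Xh] [Fintype Z]
    (p : Xr × Xh × Z → ℝ) {n M : ℕ} (enc : (Fin n → Xr × Xh) → Fin M)
    (G : (Fin n → Xh) × (Fin M × (Fin n → Z)) → ℝ) :
    ∑ q : (Fin n → Xh) × (Fin M × (Fin n → Z)), (∑ xr : Fin n → Xr,
      if enc (fun i => (xr i, q.1 i)) = q.2.1 then ∏ i, p (xr i, q.1 i, q.2.2 i) else 0) * G q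
    = ∑ s : Fin n → Xr × Xh × Z, (∏ j, p (s j)) *
      G (fun j => (s j).2.1, enc fun j => ((s j).1, (s j).2.1), fun j => (s j).2.2) := by
  rw [split_sum_aux, Fintype.sum_prod_type]
  refine Finset.sum_congr rfl fun xh _ => ?_
  rw [Fintype.sum_prod_type_right]
  refine Finset.sum_congr rfl fun z _ => ?_
  simp only [Finset.sum_mul]
  rw [Finset.sum_comm]
  refine Finset.sum_congr rfl fun xr _ => ?_
  simp [ite_mul]

/-- Expectations under the single-letter law. -/
lemma sl_sum_aux {Xr Xh Z U : Type} [Fintype Xr] [Fintype Xh] [Fintype Z] [Fintype U]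
    (p : Xr × Xh × Z → ℝ) (pu : Xr × Xh → U → ℝ) (G : Xh × (U × Z) → ℝ) :
    ∑ q : Xh × (U × Z), (∑ xr : Xr, p (xr, q.1, q.2.2) * pu (xr, q.1) q.2.1) * G q
    = ∑ x : Xr × Xh × Z, ∑ u, p x * pu (x.1, x.2.1) u * G (x.2.1, u, x.2.2) := by
  simp only [Fintype.sum_prod_type, Finset.sum_mul]
  conv_rhs => rw [Finset.sum_comm]
  refine Finset.sum_congr rfl fun xh _ => ?_
  have : ∀ xr : Xr, ∑ z, ∑ u, p (xr, xh, z) * pu (xr, xh) u * G (xh, u, z)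
    = ∑ u, ∑ z, p (xr, xh, z) * pu (xr, xh) u * G (xh, u, z) := fun xr => Finset.sum_comm
  simp only [this]
  conv_rhs => rw [Finset.sum_comm]
  refine Finset.sum_congr rfl fun u _ => ?_
  rw [Finset.sum_comm]

open Classical in
lemma equiv_aux {Xr Xh Z Xhat : Type} [Fintype Xr] [Fintype Xh] [Fintype Z] [Fintype Xhat]
    (p : Xr × Xh × Z → ℝ) (hp : IsPMF p) {n M : ℕ} (hn : 0 < n)
    (enc : (Fin n → Xr × Xh) → Fin M) (dec : Fin M × (Fin n → Z) → Fin n → Xhat) :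
    codeEquivocation p n M enc ≤ slEquivocation p (auxK p enc dec) := by
  have hnR : (0:ℝ) < n := by positivity
  set L : Xh × ((Z → Xhat) × Z) → ℝ := fun q =>
    ∑ xr : Xr, p (xr, q.1, q.2.2) * auxK p enc dec (xr, q.1) q.2.1 with hL
  have hL0 : ∀ q, 0 ≤ L q := fun q => Finset.sum_nonneg fun xr _ =>
    mul_nonneg (hp.1 _) ((auxK_pmf p hp hn enc dec _).1 _)
  have hLsum : ∀ G : Xh × ((Z → Xhat) × Z) → ℝ, ∑ q, L q * G q
      = (n : ℝ)⁻¹ * ∑ i, ∑ s : Fin n → Xr × Xh × Z,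
        (∏ j, p (s j)) * G ((s i).2.1, auxU enc dec i s, (s i).2.2) := by
    intro G
    rw [← transfer_aux p hp enc dec (fun x u => G (x.2.1, u, x.2.2))]
    exact sl_sum_aux p _ G
  have hP0 : ∀ s : Fin n → Xr × Xh × Z, 0 ≤ ∏ j, p (s j) :=
    fun s => Finset.prod_nonneg fun j _ => hp.1 _
  have hLpos : ∀ (s : Fin n → Xr × Xh × Z) (i : Fin n), ∏ j, p (s j) ≠ 0 →
      0 < L ((s i).2.1, auxU enc dec i s, (s i).2.2) := by
    intro s i hs
    have hs' : 0 < ∏ j, p (s j) := lt_of_le_of_ne (hP0 s) (Ne.symm hs)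
    have := hLsum (fun q => if q = ((s i).2.1, auxU enc dec i s, (s i).2.2) then 1 else 0)
    simp only [mul_ite, mul_one, mul_zero, Finset.sum_ite_eq', Finset.mem_univ, if_true] at this
    rw [this]
    refine mul_pos (by positivity) ?_
    have nn : ∀ (i' : Fin n) (s' : Fin n → Xr × Xh × Z), (0:ℝ) ≤
        if ((s' i').2.1, auxU enc dec i' s', (s' i').2.2)
          = ((s i).2.1, auxU enc dec i s, (s i).2.2) then ∏ j, p (s' j) else 0 := by
      intro i' s'
      split_ifs
      · exact hP0 s'
      · exact le_rfl
    refine Finset.sum_pos' (fun i' _ => Finset.sum_nonneg fun s' _ => nn i' s')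
      ⟨i, Finset.mem_univ _, Finset.sum_pos' (fun s' _ => nn i s') ⟨s, Finset.mem_univ _, ?_⟩⟩
    simpa using hs'
  let q : Xh × ((Z → Xhat) × Z) → ℝ := fun x => L x / ∑ a, L (a, x.2)
  have hS0 : ∀ b, 0 ≤ ∑ a, L (a, b) := fun b => Finset.sum_nonneg fun a _ => hL0 _
  have hq0 : ∀ x, 0 ≤ q x := fun x => div_nonneg (hL0 x) (hS0 _)
  have hq1 : ∀ b, ∑ a, q (a, b) ≤ 1 := by
    intro b
    simp only [q]
    rw [← Finset.sum_div]
    exact div_self_le_one _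
  have hqpos : ∀ x, 0 < L x → 0 < q x := by
    intro x hx
    refine div_pos hx (lt_of_lt_of_le hx ?_)
    exact Finset.single_le_sum (f := fun a => L (a, x.2)) (fun a _ => hL0 _) (Finset.mem_univ x.1)
  have hsl : slEquivocation p (auxK p enc dec) = -∑ x, L x * Real.logb 2 (q x) :=
    condH2_eq_aux L hL0
  let V : Fin n → Fin M × (Fin n → Z) → (Z → Xhat) × Z := fun i b =>
    (fun z => dec (b.1, Function.update b.2 i z) i, b.2 i)
  let Q : (Fin n → Xh) × (Fin M × (Fin n → Z)) → ℝ := fun t => ∏ i, q (t.1 i, V i t.2)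
  unfold codeEquivocation
  rw [hsl, hLsum]
  set P : (Fin n → Xh) × (Fin M × (Fin n → Z)) → ℝ := fun q =>
    ∑ xr : Fin n → Xr,
      if enc (fun i => (xr i, q.1 i)) = q.2.1 then ∏ i, p (xr i, q.1 i, q.2.2 i) else 0 with hP
  have hPac : ∀ x, P x ≠ 0 → ∀ i, 0 < q (x.1 i, V i x.2) := by
    rintro ⟨xh, w, z⟩ hx i
    obtain ⟨xr, -, hxr⟩ := Finset.exists_ne_zero_of_sum_ne_zero hx
    simp only at hxr
    split_ifs at hxr with hw
    · subst hw
      exact hqpos _ (hLpos (fun j => (xr j, xh j, z j)) i hxr)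
    · exact absurd rfl hxr
  have g := gibbs_aux P
    (fun x => Finset.sum_nonneg fun xr _ => by
      split_ifs
      · exact Finset.prod_nonneg fun j _ => hp.1 _
      · exact le_rfl) Q
    (fun x => Finset.prod_nonneg fun i _ => hq0 _)
    (fun b => by
      have : ∑ a : Fin n → Xh, Q (a, b) = ∏ i, ∑ a, q (a, V i b) := by
        rw [Finset.prod_univ_sum (fun _ => Finset.univ) (fun i a => q (a, V i b)),
          Fintype.piFinset_univ]
      rw [this]
      exact Finset.prod_le_one (fun i _ => Finset.sum_nonneg fun a _ => hq0 _) fun i _ => hq1 _)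
    (fun x hx => Finset.prod_ne_zero_iff.mpr fun i _ => (hPac x hx i).ne')
  have e1 : ∑ x, P x * Real.logb 2 (Q x) = ∑ x, P x * ∑ i, Real.logb 2 (q (x.1 i, V i x.2)) := by
    refine Finset.sum_congr rfl fun x _ => ?_
    by_cases hx : P x = 0
    · simp [hx]
    · congr 1
      exact Real.logb_prod _ _ fun i _ => (hPac x hx i).ne'
  have e2 := code_sum_aux p enc (fun x => ∑ i, Real.logb 2 (q (x.1 i, V i x.2)))
  rw [e1, show (∑ x, P x * ∑ i, Real.logb 2 (q (x.1 i, V i x.2))) = _ from e2] at g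
  have e3 : ∑ s : Fin n → Xr × Xh × Z, (∏ j, p (s j)) *
      ∑ i, Real.logb 2 (q ((s i).2.1,
        V i (enc fun j => ((s j).1, (s j).2.1), fun j => (s j).2.2)))
      = ∑ i, ∑ s : Fin n → Xr × Xh × Z,
        (∏ j, p (s j)) * Real.logb 2 (q ((s i).2.1, auxU enc dec i s, (s i).2.2)) := by
    rw [Finset.sum_comm]
    refine Finset.sum_congr rfl fun s _ => ?_
    rw [Finset.mul_sum]
    rfl
  rw [e3] at g
  rw [← mul_neg]
  exact mul_le_mul_of_nonneg_left g (by positivity)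

lemma sl_bdd_aux {Xr Xh Z U : Type} [Fintype Xr] [Fintype Xh] [Fintype Z] [Fintype U] [Nonempty Xh]
    (p : Xr × Xh × Z → ℝ) (hp : IsPMF p) (pu : Xr × Xh → U → ℝ) (hpu : ∀ a, IsPMF (pu a)) :
    slEquivocation p pu ≤ -Real.logb 2 ((Fintype.card Xh : ℝ)⁻¹) := by
  have hc : (Fintype.card Xh : ℝ) ≠ 0 := by
    have := Fintype.card_pos (α := Xh)
    positivity
  refine (gibbs_aux _ (fun q => Finset.sum_nonneg fun xr _ =>
    mul_nonneg (hp.1 _) ((hpu _).1 _)) (fun _ => (Fintype.card Xh : ℝ)⁻¹)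
    (fun _ => by positivity) (fun b => by simp [hc]) (fun _ _ => inv_ne_zero hc)).trans ?_
  rw [sl_sum_aux p pu (fun _ => Real.logb 2 ((Fintype.card Xh : ℝ)⁻¹))]
  simp only [← Finset.sum_mul, ← Finset.mul_sum, (hpu _).2, mul_one, hp.2, one_mul, le_refl]

lemma H2_equiv_aux {α β : Type} [Fintype α] [Fintype β] (e : α ≃ β) (P : β → ℝ) :
    H2 (fun a => P (e a)) = H2 P := by
  unfold H2
  rw [Equiv.sum_comp e (fun b => P b * Real.logb 2 (P b))]

lemma H2_cont_aux {α T : Type} [Fintype α] [TopologicalSpace T] (P : T → α → ℝ)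
    (h : ∀ a, Continuous fun t => P t a) : Continuous fun t => H2 (P t) := by
  unfold H2
  refine (continuous_finset_sum _ fun a _ => ?_).neg
  have : (fun t => P t a * Real.logb 2 (P t a))
      = fun t => (P t a * Real.log (P t a)) / Real.log 2 := by
    funext t
    unfold Real.logb
    ring
  rw [this]
  exact (Real.continuous_mul_log.comp (h a)).div_const _

theorem equivocation_converse {Xr Xh Z Xhat : Type}
    [Fintype Xr] [Fintype Xh] [Fintype Z] [Fintype Xhat]
    [Nonempty Xr] [Nonempty Xh] [Nonempty Z] [Nonempty Xhat]
    (p : Xr × Xh × Z → ℝ) (hp : IsPMF p)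
    (d : Xr × Xhat → ℝ) (hd : ∀ a, 0 ≤ d a)
    (D E : ℝ) (h : AchievablePair p d D E) :
    E ≤ Gamma p d D := by
  classical
  -- a sequence of test channels with the fixed auxiliary alphabet `Z → Xhat`
  have step : ∀ m : ℕ, ∃ pu : Xr × Xh → (Z → Xhat) → ℝ,
      pu ∈ Set.pi Set.univ (fun _ : Xr × Xh => stdSimplex ℝ (Z → Xhat)) ∧
      slDistortion p d pu (fun q => q.1 q.2) ≤ D + 1 / ((m : ℝ) + 1) ∧
      E - 1 / ((m : ℝ) + 1) ≤ slEquivocation p pu := by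
    intro m
    obtain ⟨n, M, enc, dec, hn, -, h1, h2⟩ := h (1 / ((m : ℝ) + 1)) (by positivity)
    refine ⟨auxK p enc dec, fun a _ => auxK_pmf p hp hn enc dec a, ?_, ?_⟩
    · have := dist_aux p hp d enc dec
      exact this.trans_le h1
    · exact h2.trans (equiv_aux p hp hn enc dec)
  choose f hfK hfD hfE using step
  have hK : IsCompact (Set.pi Set.univ (fun _ : Xr × Xh => stdSimplex ℝ (Z → Xhat))) :=
    isCompact_univ_pi fun _ => isCompact_stdSimplex ℝ (Z → Xhat)
  obtain ⟨pu, hpuK, φ, hφ, hlim⟩ := hK.tendsto_subseq hfK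
  have hz : Filter.Tendsto (fun m : ℕ => 1 / ((φ m : ℝ) + 1)) Filter.atTop (nhds 0) :=
    tendsto_one_div_add_atTop_nhds_zero_nat.comp hφ.tendsto_atTop
  have cD : Continuous fun pu : Xr × Xh → (Z → Xhat) → ℝ =>
      slDistortion p d pu (fun q => q.1 q.2) := by
    unfold slDistortion
    fun_prop
  have cE : Continuous fun pu : Xr × Xh → (Z → Xhat) → ℝ => slEquivocation p pu := by
    unfold slEquivocation condH2
    refine (H2_cont_aux _ fun a => ?_).sub (H2_cont_aux _ fun a => ?_) <;> fun_prop
  have hD : slDistortion p d pu (fun q => q.1 q.2) ≤ D := by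
    refine le_of_tendsto_of_tendsto' ((cD.tendsto pu).comp hlim)
      (g := fun m : ℕ => D + 1 / ((φ m : ℝ) + 1)) ?_ fun m => hfD (φ m)
    simpa using hz.const_add D
  have hE : E ≤ slEquivocation p pu := by
    refine le_of_tendsto_of_tendsto' (f := fun m : ℕ => E - 1 / ((φ m : ℝ) + 1)) ?_
      ((cE.tendsto pu).comp hlim) fun m => hfE (φ m)
    simpa using hz.const_sub E
  have hpmf : ∀ a, IsPMF (pu a) := fun a => hpuK a (Set.mem_univ _)
  -- relabel the auxiliary alphabet
  let e := Fintype.equivFin (Z → Xhat)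
  refine hE.trans (le_csSup ⟨-Real.logb 2 ((Fintype.card Xh : ℝ)⁻¹), ?_⟩
    ⟨_, fun a k => pu a (e.symm k), fun q => e.symm q.1 q.2, fun a => ⟨fun k => (hpmf a).1 _, ?_⟩,
      ?_, ?_⟩)
  · rintro x ⟨k, pu', g, h1, -, rfl⟩
    exact sl_bdd_aux p hp pu' h1
  · rw [Equiv.sum_comp e.symm (pu a)]
    exact (hpmf a).2
  · refine le_of_eq_of_le ?_ hD
    unfold slDistortion
    refine Finset.sum_congr rfl fun x _ => ?_
    exact Equiv.sum_comp e.symm (fun u => p x * pu (x.1, x.2.1) u * d (x.1, u x.2.2))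
  · unfold slEquivocation condH2
    congr 1
    · exact (H2_equiv_aux ((Equiv.refl Xh).prodCongr (e.symm.prodCongr (Equiv.refl Z)))
        (fun q : Xh × ((Z → Xhat) × Z) =>
          ∑ xr : Xr, p (xr, q.1, q.2.2) * pu (xr, q.1) q.2.1)).symm
    · exact (H2_equiv_aux (e.symm.prodCongr (Equiv.refl Z))
        (fun b : (Z → Xhat) × Z => ∑ a,
          ∑ xr : Xr, p (xr, a, b.2) * pu (xr, a) b.1)).symm
end

section
/- Rate converse of the side-information characterization: if the triple (R, D, E) is achievable, then R ≥ R(D, E), where R(D, E) is the infimum of I(X_r, X_h ; U) − I(Z ; U) over all (D, E)-admissible single-letter choices (p(u | x_r, x_h), g). -/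
open scoped BigOperators

namespace RateConv

open Finset

theorem isCompact_hull {E : Type} [AddCommGroup E] [Module ℝ E] [TopologicalSpace E]
    [IsTopologicalAddGroup E] [ContinuousSMul ℝ E] [FiniteDimensional ℝ E]
    {s : Set E} (hs : IsCompact s) : IsCompact (convexHull ℝ s) := by
  classical
  rcases s.eq_empty_or_nonempty with rfl | ⟨x0, hx0⟩
  · simp
  let N := Module.finrank ℝ E + 1
  let φ : (Fin N → ℝ) × (Fin N → E) → E := fun q => ∑ i, q.1 i • q.2 i
  have hφ : Continuous φ := by
    apply continuous_finsetSum
    intro i _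
    fun_prop
  have hK : IsCompact ((stdSimplex ℝ (Fin N)) ×ˢ (Set.univ.pi fun _ : Fin N => s)) :=
    (isCompact_stdSimplex ℝ (Fin N)).prod (isCompact_univ_pi fun _ => hs)
  have : convexHull ℝ s = φ '' ((stdSimplex ℝ (Fin N)) ×ˢ (Set.univ.pi fun _ : Fin N => s)) := by
    apply Set.Subset.antisymm
    · intro x hx
      obtain ⟨ι, hι, z, w, hz, haff, hw, hw1, hx⟩ := eq_pos_convex_span_of_mem_convexHull hx
      have hcard : Fintype.card ι ≤ N := by
        refine haff.card_le_finrank_succ.trans ?_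
        exact Nat.succ_le_succ (Submodule.finrank_le _)
      obtain ⟨e⟩ : Nonempty (ι ↪ Fin N) := by
        apply Function.Embedding.nonempty_of_card_le
        simpa using hcard
      have key : ∀ (F : Type) [AddCommMonoid F] (f : Fin N → F) (g : ι → F),
          (∀ i, f (e i) = g i) → (∀ j, j ∉ Set.range e → f j = 0) → ∑ j, f j = ∑ i, g i := by
        intro F _ f g h1 h2
        symm
        apply Finset.sum_of_injOn e (e.injective.injOn) (by simp)
        · intro j _ hj
          apply h2
          simpa using hj
        · intro i _
          exact (h1 i).symm
      refine ⟨(Function.extend e w 0, Function.extend e z fun _ => x0), ⟨⟨?_, ?_⟩, ?_⟩, ?_⟩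
      · intro j
        by_cases hj : ∃ i, e i = j
        · obtain ⟨i, rfl⟩ := hj
          simp only [e.injective.extend_apply]
          exact (hw i).le
        · simp [Function.extend_apply' _ _ _ hj]
      · rw [← hw1]
        apply key
        · intro i; simp only [e.injective.extend_apply]
        · intro j hj
          simp only
          rw [Function.extend_apply' _ _ _ hj]; rfl
      · intro j _
        by_cases hj : ∃ i, e i = j
        · obtain ⟨i, rfl⟩ := hj
          simp only [e.injective.extend_apply]
          exact hz ⟨i, rfl⟩
        · simp only [Function.extend_apply' _ _ _ hj]
          exact hx0
      · rw [← hx]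
        apply key
        · intro i; simp only [e.injective.extend_apply]
        · intro j hj
          simp only
          rw [Function.extend_apply' _ _ _ hj]; simp
    · rintro _ ⟨⟨w, z⟩, ⟨⟨h0, h1⟩, hz⟩, rfl⟩
      exact mem_convexHull_of_exists_fintype w z h0 h1 (fun i => hz i trivial) rfl
  rw [this]
  exact hK.image hφ

/-- Unnormalised entropy of a nonnegative function. -/
noncomputable def hc {α : Type} [Fintype α] (f : α → ℝ) : ℝ :=
  H2 f + (∑ a, f a) * Real.logb 2 (∑ a, f a)

theorem condH2_eq {α β : Type} [Fintype α] [Fintype β] (p : α × β → ℝ) :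
    condH2 p = ∑ b, hc (fun a => p (a, b)) := by
  unfold condH2 hc H2
  rw [Finset.sum_add_distrib, Finset.sum_neg_distrib, Fintype.sum_prod_type_right]
  ring

theorem hc_smul {α : Type} [Fintype α] (c : ℝ) (f : α → ℝ) :
    hc (fun a => c * f a) = c * hc f := by
  by_cases hc0 : c = 0
  · simp [hc, H2, hc0]
  have key : ∀ y : ℝ, c * y * Real.logb 2 (c * y) = c * y * Real.logb 2 c + c * (y * Real.logb 2 y) := by
    intro y
    by_cases hy : y = 0
    · simp [hy]
    · rw [Real.logb_mul hc0 hy]; ring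
  unfold hc H2
  rw [← Finset.mul_sum, key]
  simp_rw [key]
  rw [Finset.sum_add_distrib, ← Finset.mul_sum, ← Finset.sum_mul, ← Finset.mul_sum]
  ring

theorem condH2_smul {α β : Type} [Fintype α] [Fintype β] (c : ℝ) (p : α × β → ℝ) :
    condH2 (fun q => c * p q) = c * condH2 p := by
  rw [condH2_eq, condH2_eq, Finset.mul_sum]
  exact Finset.sum_congr rfl fun b _ => hc_smul c _

theorem condH2_slice {α U Z : Type} [Fintype α] [Fintype U] [Fintype Z] (p : α × (U × Z) → ℝ) :
    condH2 p = ∑ u, condH2 (fun q : α × Z => p (q.1, (u, q.2))) := by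
  simp_rw [condH2_eq]
  rw [Fintype.sum_prod_type]

theorem condH2_reindex {α β γ : Type} [Fintype α] [Fintype β] [Fintype γ] (e : γ ≃ β)
    (p : α × β → ℝ) : condH2 (fun q : α × γ => p (q.1, e q.2)) = condH2 p := by
  rw [condH2_eq, condH2_eq]
  apply Fintype.sum_equiv e
  intro b
  rfl

theorem H2_reindex {α β : Type} [Fintype α] [Fintype β] (e : α ≃ β)
    (p : β → ℝ) : H2 (fun q => p (e q)) = H2 p := by
  unfold H2
  rw [e.sum_comp (fun b => p b * Real.logb 2 (p b))]

theorem gibbs {α : Type} [Fintype α] (f g : α → ℝ) (hf : ∀ a, 0 ≤ f a) (hg : ∀ a, 0 ≤ g a)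
    (hs : ∑ a, g a ≤ ∑ a, f a) (h0 : ∀ a, g a = 0 → f a = 0) :
    ∑ a, f a * Real.logb 2 (g a) ≤ ∑ a, f a * Real.logb 2 (f a) := by
  have hl : 0 < Real.log 2 := Real.log_pos (by norm_num)
  have : ∑ a, f a * (Real.log (g a) - Real.log (f a)) ≤ ∑ a, (g a - f a) := by
    apply Finset.sum_le_sum
    intro a _
    rcases (hf a).eq_or_lt with h | h
    · simp [← h, hg a]
    · have hga : 0 < g a := lt_of_le_of_ne (hg a) (fun h' => h.ne' (h0 a h'.symm))
      rw [← Real.log_div hga.ne' h.ne']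
      have := Real.log_le_sub_one_of_pos (div_pos hga h)
      calc f a * Real.log (g a / f a) ≤ f a * (g a / f a - 1) := by gcongr
        _ = g a - f a := by field_simp
  rw [Finset.sum_sub_distrib] at this
  have h2 : ∑ a, f a * (Real.log (g a) - Real.log (f a)) ≤ 0 := by linarith
  simp only [mul_sub, Finset.sum_sub_distrib] at h2
  simp only [Real.logb, ← mul_div_assoc, ← Finset.sum_div]
  apply div_le_div_of_nonneg_right _ hl.le
  linarith

theorem hc_le_card {α : Type} [Fintype α] [Nonempty α] (f : α → ℝ) (hf : ∀ a, 0 ≤ f a) :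
    hc f ≤ (∑ a, f a) * Real.logb 2 (Fintype.card α) := by
  set T := ∑ a, f a with hT
  have hT0 : 0 ≤ T := Finset.sum_nonneg fun a _ => hf a
  have hN : (0 : ℝ) < Fintype.card α := by exact_mod_cast Fintype.card_pos
  rcases hT0.eq_or_lt with h | h
  · have h' : ∀ a, f a = 0 := by
      intro a
      exact (Finset.sum_eq_zero_iff_of_nonneg (fun a _ => hf a)).1 (hT.symm.trans h.symm) a (Finset.mem_univ a)
    simp [hc, H2, h', ← h]
  · have := gibbs f (fun _ => T / Fintype.card α) hf (fun _ => by positivity)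
      (by simp; field_simp; rfl) (fun a ha => absurd ha (by positivity))
    rw [← Finset.sum_mul, Real.logb_div h.ne' hN.ne', ← hT] at this
    unfold hc H2
    rw [← hT]
    linarith

open Classical in
noncomputable def marg {ι α : Type} [Fintype ι] [DecidableEq ι] [Fintype α] (i : ι) (f : (ι → α) → ℝ) (a : α) : ℝ :=
  ∑ x : ι → α, if x i = a then f x else 0

theorem marg_sum {ι α : Type} [Fintype ι] [DecidableEq ι] [Fintype α] (i : ι) (f : (ι → α) → ℝ) (φ : α → ℝ) :
    ∑ a, marg i f a * φ a = ∑ x, f x * φ (x i) := by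
  classical
  unfold marg
  simp_rw [Finset.sum_mul]
  rw [Finset.sum_comm]
  apply Finset.sum_congr rfl
  intro x _
  simp [ite_mul]

theorem hc_subadd {ι α : Type} [Fintype ι] [DecidableEq ι] [Fintype α] (f : (ι → α) → ℝ) (hf : ∀ a, 0 ≤ f a) :
    hc f ≤ ∑ i, hc (marg i f) := by
  classical
  have hm : ∀ i a, 0 ≤ marg i f a := by
    intro i a
    apply Finset.sum_nonneg
    intro x _
    split_ifs
    · exact hf x
    · exact le_rfl
  set T := ∑ a, f a with hT
  have hT0 : 0 ≤ T := Finset.sum_nonneg fun a _ => hf a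
  have hmT : ∀ i, ∑ a, marg i f a = T := by
    intro i
    have := marg_sum i f (fun _ => 1)
    simpa using this
  rcases hT0.eq_or_lt with h | h
  · have h' : ∀ a, f a = 0 := by
      intro a
      exact (Finset.sum_eq_zero_iff_of_nonneg (fun a _ => hf a)).1 (hT.symm.trans h.symm) a (Finset.mem_univ a)
    simp [hc, H2, h', marg]
  · have hpos : ∀ x i, f x ≠ 0 → 0 < marg i f (x i) := by
      intro x i hx
      have : f x ≤ marg i f (x i) := by
        have := Finset.single_le_sum (f := fun y : ι → α => if y i = x i then f y else 0)
          (fun y _ => by split_ifs; exacts [hf y, le_rfl]) (Finset.mem_univ x)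
        simp only [if_true] at this
        unfold marg
        convert this
      exact lt_of_lt_of_le (lt_of_le_of_ne (hf x) (Ne.symm hx)) this
    have hg := gibbs f (fun x => T * ∏ i, (marg i f (x i) / T)) hf
      (fun x => mul_nonneg hT0 (Finset.prod_nonneg fun i _ => div_nonneg (hm _ _) hT0))
      (by
        rw [← Finset.mul_sum, ← Fintype.prod_sum (fun i a => marg i f a / T)]
        simp_rw [← Finset.sum_div, hmT, div_self h.ne']
        simp only [Finset.prod_const_one, mul_one]
        exact hT.le)
      (by
        intro x hx
        by_contra hne
        have : 0 < T * ∏ i, (marg i f (x i) / T) :=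
          mul_pos h (Finset.prod_pos fun i _ => div_pos (hpos x i hne) h)
        exact this.ne' hx)
    have he : ∀ x, f x * Real.logb 2 (T * ∏ i, (marg i f (x i) / T)) =
        f x * Real.logb 2 T + ∑ i, (f x * Real.logb 2 (marg i f (x i)) - f x * Real.logb 2 T) := by
      intro x
      by_cases hx : f x = 0
      · simp [hx]
      · rw [Real.logb_mul h.ne' (Finset.prod_pos fun i _ => div_pos (hpos x i hx) h).ne',
          Real.logb_prod _ _ (fun i _ => (div_pos (hpos x i hx) h).ne'), mul_add, Finset.mul_sum]
        congr 1
        apply Finset.sum_congr rfl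
        intro i _
        rw [Real.logb_div (hpos x i hx).ne' h.ne']; ring
    simp_rw [he] at hg
    rw [Finset.sum_add_distrib, Finset.sum_comm, ← Finset.sum_mul, ← hT] at hg
    simp_rw [Finset.sum_sub_distrib, ← Finset.sum_mul, ← hT] at hg
    unfold hc H2
    simp_rw [hmT, fun i => marg_sum i f (fun a => Real.logb 2 (marg i f a))]
    simp only [Finset.sum_add_distrib, Finset.sum_neg_distrib, Finset.sum_sub_distrib] at hg ⊢
    rw [← hT]
    have h3 : (∑ _x : ι, T) * Real.logb 2 T = ∑ _x : ι, T * Real.logb 2 T := Finset.sum_mul _ _ _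
    linarith

theorem condH2_subadd {ι α β : Type} [Fintype ι] [DecidableEq ι] [Fintype α] [Fintype β]
    (p : (ι → α) × β → ℝ) (hp : ∀ a, 0 ≤ p a) :
    condH2 p ≤ ∑ i, condH2 (fun q : α × β => marg i (fun x => p (x, q.2)) q.1) := by
  simp_rw [condH2_eq]
  rw [Finset.sum_comm]
  apply Finset.sum_le_sum
  intro b _
  exact hc_subadd _ fun a => hp _

theorem H2_continuous {α : Type} [Fintype α] : Continuous (fun f : α → ℝ => H2 f) := by
  unfold H2
  have : Continuous (fun y : ℝ => y * Real.logb 2 y) := by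
    simp only [Real.logb, ← mul_div_assoc]
    exact Real.continuous_mul_log.div_const _
  apply Continuous.neg
  apply continuous_finsetSum
  intro a _
  exact this.comp (continuous_apply a)

theorem condH2_continuous {α β : Type} [Fintype α] [Fintype β] :
    Continuous (fun f : α × β → ℝ => condH2 f) := by
  unfold condH2
  apply H2_continuous.sub
  refine H2_continuous.comp (f := fun (f : α × β → ℝ) b => ∑ a, f (a, b)) ?_
  fun_prop

theorem H2_kernel {α U : Type} [Fintype α] [Fintype U] (f : α → ℝ) (k : α → U → ℝ)
    (hk : ∀ a, IsPMF (k a)) :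
    H2 (fun q : α × U => f q.1 * k q.1 q.2) = H2 f + ∑ a, f a * H2 (k a) := by
  unfold H2
  rw [Fintype.sum_prod_type]
  simp only [mul_neg, Finset.sum_neg_distrib, ← neg_add]
  rw [← Finset.sum_add_distrib]
  congr 1
  apply Finset.sum_congr rfl
  intro a _
  have : ∀ u, f a * k a u * Real.logb 2 (f a * k a u) =
      (f a * Real.logb 2 (f a)) * k a u + f a * (k a u * Real.logb 2 (k a u)) := by
    intro u
    by_cases h1 : f a = 0
    · simp [h1]
    by_cases h2 : k a u = 0
    · simp [h2]
    rw [Real.logb_mul h1 h2]; ring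
  simp_rw [this]
  rw [Finset.sum_add_distrib, ← Finset.mul_sum, (hk a).2, ← Finset.mul_sum, mul_one]

theorem H2_det {α U : Type} [Fintype α] [Fintype U] [DecidableEq U] (f : α → ℝ) (k : α → U) :
    H2 (fun q : α × U => if k q.1 = q.2 then f q.1 else 0) = H2 f := by
  unfold H2
  rw [Fintype.sum_prod_type]
  congr 1
  apply Finset.sum_congr rfl
  intro a _
  simp [ite_mul]

theorem sum_prod_apply {ι α : Type} [Fintype ι] [DecidableEq ι] [Fintype α] (f : α → ℝ) (hf : ∑ a, f a = 1)
    (i : ι) (φ : α → ℝ) : ∑ x : ι → α, (∏ j, f (x j)) * φ (x i) = ∑ a, f a * φ a := by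
  classical
  have h1 : ∀ x : ι → α, (∏ j, f (x j)) * φ (x i) = ∏ j, (f (x j) * if j = i then φ (x j) else 1) := by
    intro x
    rw [Finset.prod_mul_distrib]
    simp
  simp_rw [h1]
  rw [← Fintype.prod_sum (fun j a => f a * if j = i then φ a else 1)]
  rw [Finset.prod_eq_single i]
  · simp
  · intro j _ hj
    simp [hj, hf]
  · simp

theorem H2_prod {ι α : Type} [Fintype ι] [DecidableEq ι] [Fintype α] (f : α → ℝ) (hf : ∑ a, f a = 1) :
    H2 (fun x : ι → α => ∏ j, f (x j)) = Fintype.card ι * H2 f := by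
  unfold H2
  have h1 : ∀ x : ι → α, (∏ j, f (x j)) * Real.logb 2 (∏ j, f (x j)) =
      ∑ i, (∏ j, f (x j)) * Real.logb 2 (f (x i)) := by
    intro x
    by_cases hx : ∏ j, f (x j) = 0
    · simp [hx]
    · rw [Real.logb_prod _ _ (fun i hi => Finset.prod_ne_zero_iff.1 hx i hi), Finset.mul_sum]
  simp_rw [h1]
  rw [Finset.sum_comm]
  simp_rw [fun i : ι => sum_prod_apply f hf i (fun a => Real.logb 2 (f a))]
  simp

section single
set_option linter.unusedSectionVars false
variable {Xr Xh Z Xhat : Type} [Fintype Xr] [Fintype Xh] [Fintype Z] [Fintype Xhat]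

noncomputable def dt (p : Xr × Xh × Z → ℝ) (d : Xr × Xhat → ℝ) (g : Z → Xhat)
    (t : Xr × Xh → ℝ) : ℝ :=
  ∑ x : Xr × Xh × Z, p x * t (x.1, x.2.1) * d (x.1, g x.2.2)

noncomputable def et (p : Xr × Xh × Z → ℝ) (t : Xr × Xh → ℝ) : ℝ :=
  condH2 (fun q : Xh × Z => ∑ xr : Xr, p (xr, q.1, q.2) * t (xr, q.1))

noncomputable def rt (p : Xr × Xh × Z → ℝ) (t : Xr × Xh → ℝ) : ℝ :=
  condH2 (fun q : (Xr × Xh) × Z => p (q.1.1, q.1.2, q.2) * t q.1)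

noncomputable def CXZ (p : Xr × Xh × Z → ℝ) : ℝ :=
  condH2 (fun q : (Xr × Xh) × Z => p (q.1.1, q.1.2, q.2))

theorem dt_smul (p : Xr × Xh × Z → ℝ) (d : Xr × Xhat → ℝ) (g : Z → Xhat) (c : ℝ)
    (t : Xr × Xh → ℝ) : dt p d g (c • t) = c * dt p d g t := by
  unfold dt
  rw [Finset.mul_sum]
  apply Finset.sum_congr rfl
  intro x _
  simp only [Pi.smul_apply, smul_eq_mul]; ring

theorem et_smul (p : Xr × Xh × Z → ℝ) (c : ℝ) (t : Xr × Xh → ℝ) :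
    et p (c • t) = c * et p t := by
  unfold et
  rw [← condH2_smul]
  congr 1
  funext q
  rw [Finset.mul_sum]
  apply Finset.sum_congr rfl
  intro x _
  simp only [Pi.smul_apply, smul_eq_mul]; ring

theorem rt_smul (p : Xr × Xh × Z → ℝ) (c : ℝ) (t : Xr × Xh → ℝ) :
    rt p (c • t) = c * rt p t := by
  unfold rt
  rw [← condH2_smul]
  congr 1
  funext q
  simp only [Pi.smul_apply, smul_eq_mul]; ring

noncomputable def pt (p : Xr × Xh × Z → ℝ) (d : Xr × Xhat → ℝ) (g : Z → Xhat)
    (t : Xr × Xh → ℝ) : (Xr × Xh → ℝ) × ℝ × ℝ × ℝ :=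
  (t, dt p d g t, et p t, rt p t)

theorem pt_smul (p : Xr × Xh × Z → ℝ) (d : Xr × Xhat → ℝ) (g : Z → Xhat) (c : ℝ)
    (t : Xr × Xh → ℝ) : pt p d g (c • t) = c • pt p d g t := by
  simp [pt, dt_smul, et_smul, rt_smul]

theorem pt_continuous (p : Xr × Xh × Z → ℝ) (d : Xr × Xhat → ℝ) (g : Z → Xhat) :
    Continuous (pt p d g) := by
  unfold pt
  refine continuous_id.prodMk (Continuous.prodMk ?_ (Continuous.prodMk ?_ ?_))
  · unfold dt; fun_prop
  · unfold et
    refine condH2_continuous.comp (f := fun (t : Xr × Xh → ℝ) (q : Xh × Z) =>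
      ∑ xr : Xr, p (xr, q.1, q.2) * t (xr, q.1)) ?_
    fun_prop
  · unfold rt
    refine condH2_continuous.comp (f := fun (t : Xr × Xh → ℝ) (q : (Xr × Xh) × Z) =>
      p (q.1.1, q.1.2, q.2) * t q.1) ?_
    fun_prop

def KK (X : Type) [Fintype X] : Set (X → ℝ) := {t | (∀ x, 0 ≤ t x) ∧ ∑ x, t x = Fintype.card X}

theorem KK_compact (X : Type) [Fintype X] : IsCompact (KK X) := by
  have h : KK X ⊆ Set.univ.pi (fun _ => Set.Icc (0 : ℝ) (Fintype.card X)) := by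
    rintro t ⟨h0, h1⟩ x _
    refine ⟨h0 x, ?_⟩
    rw [← h1]
    exact Finset.single_le_sum (fun y _ => h0 y) (Finset.mem_univ x)
  refine (isCompact_univ_pi fun _ => isCompact_Icc).of_isClosed_subset ?_ h
  have : KK X = (⋂ x, {t : X → ℝ | 0 ≤ t x}) ∩ {t | ∑ x, t x = Fintype.card X} := by
    ext t; simp [KK]
  rw [this]
  refine (isClosed_iInter fun x => isClosed_le continuous_const (continuous_apply x)).inter ?_
  exact isClosed_eq (by fun_prop) continuous_const

def SS (p : Xr × Xh × Z → ℝ) (d : Xr × Xhat → ℝ) : Set ((Xr × Xh → ℝ) × ℝ × ℝ × ℝ) :=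
  convexHull ℝ (⋃ g : Z → Xhat, pt p d g '' KK (Xr × Xh))

theorem SS_compact (p : Xr × Xh × Z → ℝ) (d : Xr × Xhat → ℝ) : IsCompact (SS p d) := by
  apply isCompact_hull
  exact isCompact_iUnion fun g => (KK_compact _).image (pt_continuous p d g)

noncomputable def slH {U : Type} [Fintype U] (p : Xr × Xh × Z → ℝ) (pu : Xr × Xh → U → ℝ) : ℝ :=
  condH2 (fun q : (Xr × Xh) × (U × Z) => p (q.1.1, q.1.2, q.2.2) * pu q.1 q.2.1)

theorem slDistortion_eq {U : Type} [Fintype U] (p : Xr × Xh × Z → ℝ) (d : Xr × Xhat → ℝ)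
    (pu : Xr × Xh → U → ℝ) (g : U × Z → Xhat) :
    slDistortion p d pu g = ∑ u, dt p d (fun z => g (u, z)) (fun x => pu x u) := by
  unfold slDistortion dt
  rw [Finset.sum_comm]

theorem slEquivocation_eq {U : Type} [Fintype U] (p : Xr × Xh × Z → ℝ)
    (pu : Xr × Xh → U → ℝ) :
    slEquivocation p pu = ∑ u, et p (fun x => pu x u) := by
  unfold slEquivocation et
  rw [condH2_slice]

theorem slH_eq {U : Type} [Fintype U] (p : Xr × Xh × Z → ℝ)
    (pu : Xr × Xh → U → ℝ) :
    slH p pu = ∑ u, rt p (fun x => pu x u) := by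
  unfold slH rt
  rw [condH2_slice]

theorem slRate_eq {U : Type} [Fintype U] (p : Xr × Xh × Z → ℝ)
    (pu : Xr × Xh → U → ℝ) (hpu : ∀ a, IsPMF (pu a)) :
    slRate p pu = CXZ p - slH p pu := by
  have h1 := H2_kernel (fun x : Xr × Xh => ∑ z, p (x.1, x.2, z)) pu hpu
  have h2 := H2_kernel (fun x : (Xr × Xh) × Z => p (x.1.1, x.1.2, x.2)) (fun x => pu x.1)
    (fun x => hpu x.1)
  have h3 := H2_reindex
    (show (Xr × Xh) × (U × Z) ≃ ((Xr × Xh) × Z) × U from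
      ⟨fun q => ((q.1, q.2.2), q.2.1), fun q => (q.1.1, (q.2, q.1.2)), fun _ => rfl, fun _ => rfl⟩)
    (fun q => p (q.1.1.1, q.1.1.2, q.1.2) * pu q.1.1 q.2)
  have h4 := H2_reindex (Equiv.prodComm U Z)
    (fun q : Z × U => ∑ xr : Xr, ∑ xh : Xh, p (xr, xh, q.1) * pu (xr, xh) q.2)
  have h5 : (fun b : U × Z => ∑ a : Xr × Xh, p (a.1, a.2, b.2) * pu a b.1) =
      fun q => (fun q : Z × U => ∑ xr : Xr, ∑ xh : Xh, p (xr, xh, q.1) * pu (xr, xh) q.2)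
        (Equiv.prodComm U Z q) := by
    funext q
    rw [Fintype.sum_prod_type]
    rfl
  have h6 : (fun x : Xr × Xh => ∑ u, (∑ z, p (x.1, x.2, z)) * pu x u) =
      fun x => ∑ z, p (x.1, x.2, z) := by
    funext x
    rw [← Finset.mul_sum, (hpu x).2, mul_one]
  have h7 : (fun z : Z => ∑ u, ∑ xr : Xr, ∑ xh : Xh, p (xr, xh, z) * pu (xr, xh) u) =
      fun z => ∑ a : Xr × Xh, p (a.1, a.2, z) := by
    funext z
    rw [Fintype.sum_prod_type, Finset.sum_comm]
    apply Finset.sum_congr rfl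
    intro xr _
    rw [Finset.sum_comm]
    apply Finset.sum_congr rfl
    intro xh _
    rw [← Finset.mul_sum, (hpu _).2, mul_one]
  have h8 : (fun u : U => ∑ z : Z, ∑ xr : Xr, ∑ xh : Xh, p (xr, xh, z) * pu (xr, xh) u) =
      fun u => ∑ a : Xr × Xh, (∑ z, p (a.1, a.2, z)) * pu a u := by
    funext u
    simp_rw [Finset.sum_mul]
    rw [Finset.sum_comm (s := (Finset.univ : Finset (Xr × Xh)))]
    apply Finset.sum_congr rfl
    intro z _
    rw [Fintype.sum_prod_type]
  have h9 : ∑ a : (Xr × Xh) × Z, p (a.1.1, a.1.2, a.2) * H2 (pu a.1) =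
      ∑ a : Xr × Xh, (∑ z, p (a.1, a.2, z)) * H2 (pu a) := by
    rw [Fintype.sum_prod_type]
    simp_rw [Finset.sum_mul]
  simp only [Equiv.coe_fn_mk] at h3
  unfold slRate MI2 CXZ slH condH2
  simp only at *
  rw [h5, h4, h6, h7, h8, h1]
  rw [h9] at h2
  rw [h3, h2]
  ring

theorem mem_SS {U : Type} [Fintype U] [Nonempty Xr] [Nonempty Xh]
    (p : Xr × Xh × Z → ℝ) (d : Xr × Xhat → ℝ)
    (pu : Xr × Xh → U → ℝ) (g : U × Z → Xhat) (hpu : ∀ a, IsPMF (pu a)) :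
    ((fun _ => 1), slDistortion p d pu g, slEquivocation p pu, slH p pu) ∈ SS p d := by
  set N : ℝ := ((Fintype.card (Xr × Xh) : ℕ) : ℝ) with hN
  have hN0 : 0 < N := by rw [hN]; exact_mod_cast Fintype.card_pos
  let c : U → ℝ := fun u => (∑ x, pu x u) / N
  have hc0 : ∀ u, 0 ≤ c u := fun u =>
    div_nonneg (Finset.sum_nonneg fun x _ => (hpu x).1 u) hN0.le
  let t : U → Xr × Xh → ℝ := fun u => if c u = 0 then fun _ => 1 else (c u)⁻¹ • fun x => pu x u
  have hct : ∀ u, c u • t u = fun x => pu x u := by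
    intro u
    by_cases h : c u = 0
    · have h' : ∑ x, pu x u = 0 := by
        have := h
        simp only [c, div_eq_zero_iff] at this
        exact this.resolve_right hN0.ne'
      funext x
      have := (Finset.sum_eq_zero_iff_of_nonneg (fun x _ => (hpu x).1 u)).1 h' x (Finset.mem_univ x)
      simp [h, this]
    · simp only [t, if_neg h]
      rw [smul_smul, mul_inv_cancel₀ h, one_smul]
  have htK : ∀ u, t u ∈ KK (Xr × Xh) := by
    intro u
    by_cases h : c u = 0
    · simp [t, h, KK]
    · simp only [t, if_neg h]
      refine ⟨fun x => ?_, ?_⟩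
      · exact mul_nonneg (inv_nonneg.2 (hc0 u)) ((hpu x).1 u)
      · simp only [Pi.smul_apply, smul_eq_mul]
        rw [← Finset.mul_sum]
        have : ∑ x, pu x u = c u * N := by simp only [c]; field_simp
        rw [this, ← mul_assoc, inv_mul_cancel₀ h, one_mul]
  refine mem_convexHull_of_exists_fintype c (fun u => pt p d (fun z => g (u, z)) (t u)) hc0 ?_ ?_ ?_
  · simp only [c]
    rw [← Finset.sum_div, Finset.sum_comm]
    simp only [(hpu _).2]
    simp only [Finset.sum_const, Finset.card_univ, nsmul_eq_mul, mul_one]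
    exact div_self hN0.ne'
  · intro u
    exact Set.mem_iUnion.2 ⟨_, t u, htK u, rfl⟩
  · simp_rw [← pt_smul, hct]
    rw [slDistortion_eq, slEquivocation_eq, slH_eq]
    unfold pt
    refine Prod.ext ?_ (Prod.ext ?_ (Prod.ext ?_ ?_))
    · funext x
      simp only [Prod.fst_sum, Finset.sum_apply]
      exact (hpu x).2
    all_goals simp only [Prod.fst_sum, Prod.snd_sum]

theorem of_mem_SS (p : Xr × Xh × Z → ℝ) (d : Xr × Xhat → ℝ) (D E r : ℝ)
    (h : ((fun _ => 1), D, E, r) ∈ SS p d) :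
    ∃ (k : ℕ) (pu : Xr × Xh → Fin k → ℝ) (g : Fin k × Z → Xhat),
      (∀ a, IsPMF (pu a)) ∧ slDistortion p d pu g = D ∧ slEquivocation p pu = E ∧
      slH p pu = r := by
  unfold SS at h
  rw [mem_convexHull_iff_exists_fintype] at h
  obtain ⟨ι, _, w, z, hw0, hw1, hz, hs⟩ := h
  simp only [Set.mem_iUnion, Set.mem_image] at hz
  choose g t ht hgt using hz
  let e := Fintype.equivFin ι
  have hs' : ∑ i : Fin (Fintype.card ι), pt p d (g (e.symm i)) (w (e.symm i) • t (e.symm i)) =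
      ((fun _ => 1), D, E, r) := by
    rw [← hs, e.symm.sum_comp (fun i => pt p d (g i) (w i • t i))]
    apply Finset.sum_congr rfl
    intro i _
    rw [pt_smul, hgt]
  refine ⟨Fintype.card ι, fun x i => (w (e.symm i) • t (e.symm i)) x,
    fun q => g (e.symm q.1) q.2, ?_, ?_, ?_, ?_⟩
  · intro x
    refine ⟨fun i => mul_nonneg (hw0 _) ((ht _).1 x), ?_⟩
    have := congrFun (congrArg Prod.fst hs') x
    simpa [pt, Prod.fst_sum, Finset.sum_apply] using this
  · rw [slDistortion_eq]
    have := congrArg (fun q => q.2.1) hs'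
    simpa only [pt, Prod.fst_sum, Prod.snd_sum] using this
  · rw [slEquivocation_eq]
    have := congrArg (fun q => q.2.2.1) hs'
    simpa only [pt, Prod.fst_sum, Prod.snd_sum] using this
  · rw [slH_eq]
    have := congrArg (fun q => q.2.2.2) hs'
    simpa only [pt, Prod.fst_sum, Prod.snd_sum] using this

end single

section code
set_option linter.unusedSectionVars false
variable {X Z : Type} [Fintype X] [Fintype Z] {n M : ℕ}

noncomputable def JJ (P : X × Z → ℝ) (enc : (Fin n → X) → Fin M)
    (q : (Fin n → X) × (Fin M × (Fin n → Z))) : ℝ :=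
  if enc q.1 = q.2.1 then ∏ j, P (q.1 j, q.2.2 j) else 0

theorem JJ_nonneg (P : X × Z → ℝ) (hP : ∀ a, 0 ≤ P a) (enc : (Fin n → X) → Fin M)
    (q : (Fin n → X) × (Fin M × (Fin n → Z))) : 0 ≤ JJ P enc q := by
  unfold JJ
  split_ifs
  · exact Finset.prod_nonneg fun j _ => hP _
  · exact le_rfl

noncomputable def kap (P : X × Z → ℝ) (enc : (Fin n → X) → Fin M) (i : Fin n) (x : X)
    (u : Fin M × ({j : Fin n // j ≠ i} → Z)) : ℝ :=
  marg i (fun xs => if enc xs = u.1 then ∏ j : {j : Fin n // j ≠ i}, P (xs j, u.2 j) else 0) x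

theorem marg_JJ (P : X × Z → ℝ) (enc : (Fin n → X) → Fin M) (i : Fin n) (x : X)
    (w : Fin M) (zs : Fin n → Z) :
    marg i (fun xs => JJ P enc (xs, (w, zs))) x = P (x, zs i) * kap P enc i x (w, fun j => zs j) := by
  unfold kap marg JJ
  rw [Finset.mul_sum]
  apply Finset.sum_congr rfl
  intro xs _
  by_cases h : xs i = x
  · by_cases h2 : enc xs = w
    · simp only [h, h2, if_true]
      rw [Fintype.prod_eq_mul_prod_subtype_ne _ i, h]
    · simp [h, h2]
  · simp [h]

theorem kap_pmf (P : X × Z → ℝ) (hP : IsPMF P) (enc : (Fin n → X) → Fin M) (i : Fin n) (x : X) :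
    IsPMF (kap P enc i x) := by
  classical
  constructor
  · intro u
    unfold kap marg
    apply Finset.sum_nonneg
    intro xs _
    split_ifs
    · dsimp only
      split_ifs
      · exact Finset.prod_nonneg fun j _ => hP.1 _
      · exact le_rfl
    · exact le_rfl
  · unfold kap marg
    rw [Finset.sum_comm]
    have h1 : ∀ xs : Fin n → X, (∑ u : Fin M × ({j : Fin n // j ≠ i} → Z),
        if xs i = x then (if enc xs = u.1 then ∏ j : {j : Fin n // j ≠ i}, P (xs j, u.2 j) else 0) else 0)
        = if xs i = x then ∏ j : {j : Fin n // j ≠ i}, ∑ z, P (xs j, z) else 0 := by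
      intro xs
      by_cases h : xs i = x
      · simp only [h, if_true]
        rw [Fintype.prod_sum (fun (j : {j : Fin n // j ≠ i}) z => P (xs j, z)),
          Fintype.sum_prod_type, Finset.sum_comm]
        simp
      · simp [h]
    have h2 := Fintype.sum_equiv (Equiv.funSplitAt i X)
      (fun xs : Fin n → X => if xs i = x then
        ∏ j : {j : Fin n // j ≠ i}, ∑ z, P (xs j, z) else 0)
      (fun q => if q.1 = x then ∏ j, ∑ z, P (q.2 j, z) else 0) (fun _ => rfl)
    have h3 : ∑ q : X × ({j : Fin n // j ≠ i} → X),
        (if q.1 = x then ∏ j, ∑ z, P (q.2 j, z) else 0) = 1 := by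
      rw [Fintype.sum_prod_type, Finset.sum_comm]
      simp only [Finset.sum_ite_eq', Finset.mem_univ, if_true]
      rw [← Fintype.prod_sum (fun (_ : {j : Fin n // j ≠ i}) y => ∑ z, P (y, z)),
        ← Fintype.sum_prod_type, hP.2]
      simp
    rw [← h3, ← h2]
    refine Finset.sum_congr rfl fun xs _ => ?_
    rw [← h1]

theorem condH2_JJ (P : X × Z → ℝ) (hP : IsPMF P) (enc : (Fin n → X) → Fin M) (hM : 0 < M) :
    n * condH2 P - Real.logb 2 M ≤ condH2 (JJ P enc) := by
  have e1 : H2 (JJ P enc) = n * H2 P := by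
    have h1 := H2_reindex
      (show (Fin n → X) × (Fin M × (Fin n → Z)) ≃ ((Fin n → X) × (Fin n → Z)) × Fin M from
      ⟨fun q => ((q.1, q.2.2), q.2.1), fun q => (q.1.1, (q.2, q.1.2)), fun _ => rfl, fun _ => rfl⟩)
      (fun q => if enc q.1.1 = q.2 then ∏ j, P (q.1.1 j, q.1.2 j) else 0)
    have h2 := H2_det (fun q : (Fin n → X) × (Fin n → Z) => ∏ j, P (q.1 j, q.2 j))
      (fun q => enc q.1)
    have h3 := H2_reindex (Equiv.arrowProdEquivProdArrow (Fin n) (fun _ => X) (fun _ => Z))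
      (fun q : (Fin n → X) × (Fin n → Z) => ∏ j, P (q.1 j, q.2 j))
    have h4 := H2_prod (ι := Fin n) P hP.2
    simp only [Fintype.card_fin] at h4
    rw [← h4]
    calc _ = _ := h1
      _ = _ := h2
      _ = _ := h3.symm
  have hZ : ∑ z, ∑ x, P (x, z) = 1 := by
    rw [← hP.2, Fintype.sum_prod_type_right]
  have hm : ∀ zs : Fin n → Z, ∑ w, ∑ xs, JJ P enc (xs, (w, zs)) = ∏ j, ∑ x, P (x, zs j) := by
    intro zs
    rw [Finset.sum_comm, Fintype.prod_sum (fun j x => P (x, zs j))]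
    apply Finset.sum_congr rfl
    intro xs _
    simp [JJ]
  have e2 : condH2 (fun q : Fin M × (Fin n → Z) => ∑ xs, JJ P enc (xs, q)) ≤ Real.logb 2 M := by
    have : Nonempty (Fin M) := ⟨⟨0, hM⟩⟩
    rw [condH2_eq]
    calc _ ≤ ∑ zs : Fin n → Z, (∏ j, ∑ x, P (x, zs j)) * Real.logb 2 M := by
          apply Finset.sum_le_sum
          intro zs _
          have := hc_le_card (fun w : Fin M => ∑ xs, JJ P enc (xs, (w, zs)))
            (fun w => Finset.sum_nonneg fun xs _ => JJ_nonneg P hP.1 enc _)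
          rw [hm, Fintype.card_fin] at this
          exact this
      _ = Real.logb 2 M := by
          rw [← Finset.sum_mul, ← Fintype.prod_sum (fun (_ : Fin n) z => ∑ x, P (x, z))]
          simp [hZ]
  have e3 := H2_prod (ι := Fin n) (fun z => ∑ x, P (x, z)) hZ
  unfold condH2 at e2 ⊢
  simp only [hm] at e2
  rw [e1]
  rw [e3, Fintype.card_fin] at e2
  linarith

def eU (M : ℕ) (Z : Type) (i : Fin n) :
    (Fin M × (Fin n → Z)) ≃ (Fin M × ({j : Fin n // j ≠ i} → Z)) × Z where
  toFun q := ((q.1, fun j => q.2 j), q.2 i)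
  invFun q := (q.1.1, (Equiv.funSplitAt i Z).symm (q.2, q.1.2))
  left_inv q := Prod.ext rfl ((Equiv.funSplitAt i Z).symm_apply_apply q.2)
  right_inv q := by
    have := (Equiv.funSplitAt i Z).apply_symm_apply (q.2, q.1.2)
    refine Prod.ext (Prod.ext rfl ?_) ?_
    · have h2 := congrArg Prod.snd this
      exact h2
    · have h2 := congrArg Prod.fst this
      exact h2

end code

section code2
variable {Xr Xh Z Xhat : Type} [Fintype Xr] [Fintype Xh] [Fintype Z] [Fintype Xhat] {n M : ℕ}

def PP (p : Xr × Xh × Z → ℝ) : (Xr × Xh) × Z → ℝ := fun q => p (q.1.1, q.1.2, q.2)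

theorem PP_pmf (p : Xr × Xh × Z → ℝ) (hp : IsPMF p) : IsPMF (PP p) := by
  refine ⟨fun q => hp.1 _, ?_⟩
  rw [← hp.2]
  exact (Equiv.prodAssoc Xr Xh Z).sum_comp p

theorem slH_kap (p : Xr × Xh × Z → ℝ) (hp : IsPMF p) (enc : (Fin n → Xr × Xh) → Fin M) :
    condH2 (JJ (PP p) enc) ≤ ∑ i, slH p (kap (PP p) enc i) := by
  refine (condH2_subadd _ (JJ_nonneg _ (PP_pmf p hp).1 _)).trans (le_of_eq ?_)
  apply Finset.sum_congr rfl
  intro i _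
  unfold slH
  rw [← condH2_reindex (eU M Z i)]
  congr 1
  funext q
  exact marg_JJ (PP p) enc i q.1 q.2.1 q.2.2

theorem marg_pair (F : (Fin n → Xr × Xh) → ℝ) (i : Fin n) (h : Xh) :
    marg i (fun xh : Fin n → Xh => ∑ xr : Fin n → Xr, F (fun j => (xr j, xh j))) h =
      ∑ r, marg i F (r, h) := by
  classical
  have e := (Equiv.arrowProdEquivProdArrow (Fin n) (fun _ => Xr) (fun _ => Xh)).sum_comp
    (fun q => if q.2 i = h then F (fun j => (q.1 j, q.2 j)) else 0)
  rw [Fintype.sum_prod_type_right] at e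
  unfold marg
  rw [Finset.sum_comm (s := (Finset.univ : Finset Xr))]
  have e2 : ∀ xs : Fin n → Xr × Xh, (∑ r : Xr, if xs i = (r, h) then F xs else 0) =
      if (xs i).2 = h then F xs else 0 := by
    intro xs
    by_cases h2 : (xs i).2 = h
    · simp [Prod.ext_iff, h2]
    · simp [Prod.ext_iff, h2]
  have e3 : ∑ xs : Fin n → Xr × Xh, (∑ r : Xr, if xs i = (r, h) then F xs else 0) =
      ∑ xs : Fin n → Xr × Xh, if (xs i).2 = h then F xs else 0 :=
    Finset.sum_congr rfl fun xs _ => e2 xs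
  have e4 : ∀ xh : Fin n → Xh, (if xh i = h then ∑ xr : Fin n → Xr, F (fun j => (xr j, xh j)) else 0)
      = ∑ xr : Fin n → Xr, if xh i = h then F (fun j => (xr j, xh j)) else 0 := by
    intro xh
    split_ifs <;> simp
  convert (e.symm.trans e3.symm) using 1
  · exact Finset.sum_congr rfl fun xh _ => by convert e4 xh
  · exact Finset.sum_congr rfl fun xh _ => Finset.sum_congr rfl fun r _ => by congr

theorem equiv_kap (p : Xr × Xh × Z → ℝ) (hp : IsPMF p) (enc : (Fin n → Xr × Xh) → Fin M) :
    codeEquivocation p n M enc ≤ (n : ℝ)⁻¹ * ∑ i, slEquivocation p (kap (PP p) enc i) := by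
  unfold codeEquivocation
  apply mul_le_mul_of_nonneg_left _ (by positivity)
  refine (condH2_subadd _ ?_).trans (le_of_eq ?_)
  · intro q
    apply Finset.sum_nonneg
    intro xr _
    split_ifs
    · exact Finset.prod_nonneg fun j _ => hp.1 _
    · exact le_rfl
  apply Finset.sum_congr rfl
  intro i _
  unfold slEquivocation
  rw [← condH2_reindex (eU M Z i)]
  congr 1
  funext q
  refine (marg_pair (fun xs => JJ (PP p) enc (xs, q.2)) i q.1).trans ?_
  apply Finset.sum_congr rfl
  intro r _
  exact marg_JJ (PP p) enc i (r, q.1) q.2.1 q.2.2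

theorem dist_kap (p : Xr × Xh × Z → ℝ) (d : Xr × Xhat → ℝ) (enc : (Fin n → Xr × Xh) → Fin M)
    (dec : Fin M × (Fin n → Z) → Fin n → Xhat) :
    codeDistortion p d n M enc dec = (n : ℝ)⁻¹ * ∑ i, slDistortion p d (kap (PP p) enc i)
      (fun q => dec ((eU M Z i).symm q) i) := by
  have key : ∀ i, slDistortion p d (kap (PP p) enc i) (fun q => dec ((eU M Z i).symm q) i) =
      ∑ q : (Fin n → Xr × Xh) × (Fin n → Z), (∏ j, PP p (q.1 j, q.2 j)) *
        d ((q.1 i).1, dec (enc q.1, q.2) i) := by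
    intro i
    have a1 : slDistortion p d (kap (PP p) enc i) (fun q => dec ((eU M Z i).symm q) i) =
        ∑ x : Xr × Xh, ∑ q : (Fin M × ({j : Fin n // j ≠ i} → Z)) × Z,
          PP p (x, q.2) * kap (PP p) enc i x q.1 * d (x.1, dec ((eU M Z i).symm q) i) := by
      unfold slDistortion
      rw [← (Equiv.prodAssoc Xr Xh Z).sum_comp, Fintype.sum_prod_type]
      apply Finset.sum_congr rfl
      intro x _
      rw [Fintype.sum_prod_type_right]
      rfl
    rw [a1]
    have a2 : ∀ x : Xr × Xh, ∑ q : (Fin M × ({j : Fin n // j ≠ i} → Z)) × Z,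
          PP p (x, q.2) * kap (PP p) enc i x q.1 * d (x.1, dec ((eU M Z i).symm q) i) =
        ∑ q : Fin M × (Fin n → Z), marg i (fun xs => JJ (PP p) enc (xs, q)) x *
          d (x.1, dec q i) := by
      intro x
      rw [← (eU M Z i).sum_comp]
      apply Finset.sum_congr rfl
      intro q _
      rw [Equiv.symm_apply_apply]
      have := marg_JJ (PP p) enc i x q.1 q.2
      simp only [Prod.mk.eta] at this
      rw [this]
      rfl
    simp_rw [a2]
    rw [Finset.sum_comm]
    have a3 : ∀ q : Fin M × (Fin n → Z), ∑ x, marg i (fun xs => JJ (PP p) enc (xs, q)) x *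
          d (x.1, dec q i) = ∑ xs, JJ (PP p) enc (xs, q) * d ((xs i).1, dec q i) :=
      fun q => marg_sum i (fun xs => JJ (PP p) enc (xs, q)) (fun x => d (x.1, dec q i))
    simp_rw [a3]
    rw [Finset.sum_comm, Fintype.sum_prod_type]
    apply Finset.sum_congr rfl
    intro xs _
    rw [Fintype.sum_prod_type, Finset.sum_comm]
    apply Finset.sum_congr rfl
    intro zs _
    simp [JJ, ite_mul]
  simp_rw [key]
  rw [Finset.sum_comm, Finset.mul_sum]
  unfold codeDistortion
  refine Fintype.sum_equiv
    (show (Fin n → Xr × Xh × Z) ≃ (Fin n → Xr × Xh) × (Fin n → Z) from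
      ⟨fun s => (fun j => ((s j).1, (s j).2.1), fun j => (s j).2.2),
       fun q j => ((q.1 j).1, (q.1 j).2, q.2 j), fun _ => rfl, fun _ => rfl⟩) _ _ ?_
  intro s
  rw [← Finset.mul_sum]
  simp only [PP, Equiv.coe_fn_mk]
  ring

theorem SS_code [Nonempty Xr] [Nonempty Xh] (p : Xr × Xh × Z → ℝ) (hp : IsPMF p)
    (d : Xr × Xhat → ℝ) (enc : (Fin n → Xr × Xh) → Fin M)
    (dec : Fin M × (Fin n → Z) → Fin n → Xhat) (hn : 0 < n) (hM : 0 < M) :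
    ∃ E' r' : ℝ, ((fun _ => 1), codeDistortion p d n M enc dec, E', r') ∈ SS p d ∧
      codeEquivocation p n M enc ≤ E' ∧ CXZ p - Real.logb 2 M / n ≤ r' := by
  have hn' : (0 : ℝ) < n := by exact_mod_cast hn
  refine ⟨_, (n : ℝ)⁻¹ * ∑ i, slH p (kap (PP p) enc i), ?_, equiv_kap p hp enc, ?_⟩
  · rw [dist_kap]
    have hconv : Convex ℝ (SS p d) := convex_convexHull ℝ _
    have := hconv.sum_mem (t := (Finset.univ : Finset (Fin n))) (w := fun _ => (n : ℝ)⁻¹)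
      (fun _ _ => by positivity) (by simp [hn'.ne'])
      (fun i _ => mem_SS p d (kap (PP p) enc i) (fun q => dec ((eU M Z i).symm q) i)
        (fun x => kap_pmf (PP p) (PP_pmf p hp) enc i x))
    convert this using 1
    rw [← Finset.smul_sum]
    refine Prod.ext ?_ (Prod.ext ?_ (Prod.ext ?_ ?_))
    · funext x
      simp [Prod.fst_sum, hn'.ne']
    all_goals simp only [Prod.smul_fst, Prod.smul_snd, Prod.fst_sum, Prod.snd_sum, smul_eq_mul]
  · have h1 := condH2_JJ (PP p) (PP_pmf p hp) enc hM
    have h2 := h1.trans (slH_kap p hp enc)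
    have h3 : condH2 (PP p) = CXZ p := rfl
    rw [h3] at h2
    calc CXZ p - Real.logb 2 M / n = (n : ℝ)⁻¹ * (n * CXZ p - Real.logb 2 M) := by field_simp
      _ ≤ _ := by gcongr

end code2

end RateConv

open RateConv in
/-- Rate converse of the side-information characterization: if the triple `(R, D, E)` is
achievable, then `R ≥ R(D, E)`, where `R(D, E)` is the infimum of
`I(X_r, X_h ; U) - I(Z ; U)` over all `(D, E)`-admissible single-letter choices
`(p(u | x_r, x_h), g)`. -/
theorem rate_converse {Xr Xh Z Xhat : Type}
    [Fintype Xr] [Fintype Xh] [Fintype Z] [Fintype Xhat]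
    [Nonempty Xr] [Nonempty Xh] [Nonempty Z] [Nonempty Xhat]
    (p : Xr × Xh × Z → ℝ) (hp : IsPMF p)
    (d : Xr × Xhat → ℝ) (hd : ∀ a, 0 ≤ d a)
    (R D E : ℝ) (h : AchievableTriple p d R D E) :
    RDE p d D E ≤ R := by
  classical
  set C := CXZ p with hC
  have hcomp : IsCompact (SS p d ∩ {y | y.1 = fun _ => 1}) :=
    (SS_compact p d).inter_right (isClosed_eq continuous_fst continuous_const)
  have hbd : BddBelow { r : ℝ | ∃ (k : ℕ) (pu : Xr × Xh → Fin k → ℝ) (g : Fin k × Z → Xhat),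
      (∀ a, IsPMF (pu a)) ∧ slDistortion p d pu g ≤ D ∧
      E ≤ slEquivocation p pu ∧ r = slRate p pu } := by
    obtain ⟨B, hB⟩ := ((SS_compact p d).image (f := fun y => y.2.2.2) (by fun_prop)).bddAbove
    refine ⟨C - B, ?_⟩
    rintro r ⟨k, pu, g, hpu, -, -, rfl⟩
    rw [slRate_eq p pu hpu]
    have := hB ⟨_, mem_SS p d pu g hpu, rfl⟩
    simp only at this
    linarith
  let φ : (Xr × Xh → ℝ) × ℝ × ℝ × ℝ → ℝ := fun y =>
    max (y.2.1 - D) (max (E - y.2.2.1) (C - y.2.2.2 - R))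
  have hφ : Continuous φ := by fun_prop
  have hex : ∀ ε > 0, ∃ y ∈ SS p d ∩ {y | y.1 = fun _ => 1}, φ y ≤ ε := by
    intro ε hε
    obtain ⟨n, M, enc, dec, hn, hM, hR, hD, hE⟩ := h ε hε
    obtain ⟨E', r', hmem, hE', hr'⟩ := SS_code p hp d enc dec hn hM
    have hn' : (0 : ℝ) < n := by exact_mod_cast hn
    have hM' : (0 : ℝ) < M := by exact_mod_cast hM
    have hl : Real.logb 2 M / n ≤ R + ε := by
      rw [div_le_iff₀ hn', mul_comm]
      rw [Real.logb_le_iff_le_rpow (by norm_num) hM']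
      exact hR
    refine ⟨_, ⟨hmem, rfl⟩, ?_⟩
    simp only [φ]
    refine max_le (by linarith) (max_le (by linarith) (by linarith))
  obtain ⟨y1, hy1, -⟩ := hex 1 one_pos
  obtain ⟨y0, hy0, hmin⟩ := hcomp.exists_isMinOn ⟨y1, hy1⟩ hφ.continuousOn
  have hle : φ y0 ≤ 0 := by
    apply le_of_forall_pos_le_add
    intro ε hε
    obtain ⟨y, hy, hyε⟩ := hex ε hε
    have := hmin hy
    simp only [Set.mem_ofPred_eq] at this
    linarith
  obtain ⟨y01, D0, E0, r0⟩ := y0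
  obtain ⟨hS, h1⟩ := hy0
  simp only [Set.mem_ofPred_eq] at h1
  subst h1
  simp only [φ, max_le_iff] at hle
  obtain ⟨hd1, hd2, hd3⟩ := hle
  obtain ⟨k, pu, g, hpu, hDD, hEE, hrr⟩ := of_mem_SS p d D0 E0 r0 hS
  refine (csInf_le hbd ⟨k, pu, g, hpu, by linarith, by linarith, rfl⟩).trans ?_
  rw [slRate_eq p pu hpu, hrr]
  linarith
end

section
/- Reduction when there is no side information: if the side-information alphabet Z is trivial (a single element), then the auxiliary variable can be taken to be the reconstruction itself, i.e., Γ(D) = sup H(X_h | X̂_r), where the supremum is over all conditional pmfs p(x̂_r | x_r, x_h) on X̂_r satisfying E[d(X_r, X̂_r)] ≤ D under the joint law p(x_r, x_h) p(x̂_r | x_r, x_h). -/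
open scoped BigOperators

/-- Termwise estimate behind the log-sum inequality. -/
lemma term_bound (v S V T : ℝ) (hv : 0 ≤ v) (hS : v ≤ S) (hV : v ≤ V) (hT : S ≤ T) :
    v * (Real.log S - Real.log v - Real.log T + Real.log V) ≤ S * V / T - v := by
  rcases hv.eq_or_lt with h | h
  · subst h
    have : 0 ≤ S * V / T := by
      have : 0 ≤ T := hS.trans hT
      positivity
    simpa using this
  · have hS0 : 0 < S := by linarith
    have hV0 : 0 < V := by linarith
    have hT0 : 0 < T := by linarith
    have h1 := Real.log_le_sub_one_of_pos (x := S * V / (v * T)) (by positivity)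
    rw [Real.log_div (by positivity) (by positivity), Real.log_mul (by positivity) (by positivity),
      Real.log_mul (by positivity) (by positivity)] at h1
    have h2 := mul_le_mul_of_nonneg_left h1 hv
    have h3 : v * (S * V / (v * T) - 1) = S * V / T - v := by field_simp
    rw [h3] at h2
    refine le_trans (le_of_eq ?_) h2
    ring

open Classical in
/-- Grouping: a sum against a function of the image index. -/
lemma sum_push {β γ : Type} [Fintype β] [Fintype γ] (g : β → γ) (f : β → ℝ) (F : γ → ℝ) :
    ∑ y, (∑ u, if g u = y then f u else 0) * F y = ∑ u, f u * F (g u) := by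
  simp_rw [Finset.sum_mul]
  rw [Finset.sum_comm]
  simp [ite_mul]

open Classical in
lemma condH2_push {α β γ : Type} [Fintype α] [Fintype β] [Fintype γ] (g : β → γ)
    (v : α × β → ℝ) (hv : ∀ q, 0 ≤ v q) :
    condH2 v ≤ condH2 (fun q : α × γ => ∑ u, if g u = q.2 then v (q.1, u) else 0) := by
  set S : β → ℝ := fun u => ∑ a, v (a, u) with hSd
  set V : α → γ → ℝ := fun a y => ∑ u, if g u = y then v (a, u) else 0 with hVd
  set T : γ → ℝ := fun y => ∑ a, V a y with hTd
  have hT' : ∀ y, T y = ∑ u, if g u = y then S u else 0 := by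
    intro y
    simp only [hTd, hVd, hSd]
    rw [Finset.sum_comm]
    refine Finset.sum_congr rfl fun u _ => ?_
    split_ifs <;> simp
  have hS0 : ∀ u, 0 ≤ S u := fun u => Finset.sum_nonneg fun a _ => hv _
  have hvS : ∀ a u, v (a, u) ≤ S u := fun a u =>
    Finset.single_le_sum (f := fun a => v (a, u)) (fun a _ => hv _) (Finset.mem_univ a)
  have hvV : ∀ a u, v (a, u) ≤ V a (g u) := by
    intro a u
    have := Finset.single_le_sum (f := fun u' => if g u' = g u then v (a, u') else 0)
      (fun u' _ => by split_ifs <;> simp [hv]) (Finset.mem_univ u)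
    simpa using this
  have hST : ∀ u, S u ≤ T (g u) := by
    intro u
    rw [hT']
    have := Finset.single_le_sum (f := fun u' => if g u' = g u then S u' else 0)
      (fun u' _ => by split_ifs <;> simp [hS0]) (Finset.mem_univ u)
    simpa using this
  have key : ∑ u, ∑ a, v (a, u) * (Real.log (S u) - Real.log (v (a, u)) - Real.log (T (g u))
      + Real.log (V a (g u))) ≤ ∑ u, ∑ a, (S u * V a (g u) / T (g u) - v (a, u)) :=
    Finset.sum_le_sum fun u _ => Finset.sum_le_sum fun a _ =>
      term_bound _ _ _ _ (hv _) (hvS a u) (hvV a u) (hST u)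
  have hz : ∑ u, ∑ a, (S u * V a (g u) / T (g u) - v (a, u)) = 0 := by
    refine Finset.sum_eq_zero fun u _ => ?_
    rw [Finset.sum_sub_distrib, ← Finset.sum_div, ← Finset.mul_sum]
    change S u * T (g u) / T (g u) - S u = 0
    by_cases h : T (g u) = 0
    · have : S u = 0 := le_antisymm (h ▸ hST u) (hS0 u)
      simp [this]
    · field_simp
      simp
  rw [hz] at key
  have e1 : ∑ u, ∑ a, v (a, u) * (Real.log (S u) - Real.log (v (a, u)) - Real.log (T (g u))
      + Real.log (V a (g u))) = ∑ u, S u * Real.log (S u)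
      - ∑ a, ∑ u, v (a, u) * Real.log (v (a, u)) - ∑ y, T y * Real.log (T y)
      + ∑ a, ∑ y, V a y * Real.log (V a y) := by
    have a1 : ∑ y, T y * Real.log (T y) = ∑ u, S u * Real.log (T (g u)) := by
      rw [← sum_push g S (fun y => Real.log (T y))]
      exact Finset.sum_congr rfl fun y _ => by rw [← hT']
    have a2 : ∑ a, ∑ y, V a y * Real.log (V a y)
        = ∑ u, ∑ a, v (a, u) * Real.log (V a (g u)) := by
      rw [Finset.sum_comm (s := (Finset.univ : Finset β))]
      exact Finset.sum_congr rfl fun a _ =>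
        sum_push g (fun u => v (a, u)) (fun y => Real.log (V a y))
    rw [a1, a2, Finset.sum_comm (s := (Finset.univ : Finset α)), ← Finset.sum_sub_distrib,
      ← Finset.sum_sub_distrib, ← Finset.sum_add_distrib]
    refine Finset.sum_congr rfl fun u _ => ?_
    simp only [hSd, Finset.sum_mul]
    rw [← Finset.sum_sub_distrib, ← Finset.sum_sub_distrib, ← Finset.sum_add_distrib]
    exact Finset.sum_congr rfl fun a _ => by ring
  rw [e1] at key
  have hl : 0 < Real.log 2 := Real.log_pos (by norm_num)
  unfold condH2 H2
  simp only [Fintype.sum_prod_type, Real.logb, ← mul_div_assoc, ← Finset.sum_div]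
  change -((∑ a, ∑ u, v (a, u) * Real.log (v (a, u))) / Real.log 2)
      - -((∑ u, S u * Real.log (S u)) / Real.log 2)
    ≤ -((∑ a, ∑ y, V a y * Real.log (V a y)) / Real.log 2)
      - -((∑ y, T y * Real.log (T y)) / Real.log 2)
  have := div_le_div_of_nonneg_right key hl.le
  simp only [sub_div, add_div, zero_div] at this
  linarith

lemma condH2_equiv {α β γ : Type} [Fintype α] [Fintype β] [Fintype γ] (e : β ≃ γ)
    (v : α × γ → ℝ) : condH2 (fun q : α × β => v (q.1, e q.2)) = condH2 v := by
  unfold condH2 H2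
  simp only [Fintype.sum_prod_type]
  congr 2
  · exact Finset.sum_congr rfl fun a _ =>
      e.sum_comp (fun y => v (a, y) * Real.logb 2 (v (a, y)))
  · exact e.sum_comp (fun y => (∑ a, v (a, y)) * Real.logb 2 (∑ a, v (a, y)))

/-- Reduction when there is no side information: if the side-information alphabet `Z`
is trivial, the auxiliary variable can be taken to be the reconstruction itself, i.e.
`Γ(D) = sup H(X_h | X̂_r)` over all conditional pmfs `p(x̂_r | x_r, x_h)` satisfying
`E[d(X_r, X̂_r)] ≤ D` under the joint law `p(x_r, x_h) p(x̂_r | x_r, x_h)`. Here `Γ(D)`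
is the supremum of `H(X_h | U)` over all finite auxiliary alphabets `U = Fin k`,
conditional pmfs `p(u | x_r, x_h)` and functions `g : U → X̂_r` with
`E[d(X_r, g(U))] ≤ D`. -/
theorem gamma_eq_sup_over_reconstruction_channels {Xr Xh Xhat : Type}
    [Fintype Xr] [Fintype Xh] [Fintype Xhat]
    [Nonempty Xr] [Nonempty Xh] [Nonempty Xhat]
    (p : Xr × Xh → ℝ) (hp : IsPMF p)
    (d : Xr × Xhat → ℝ) (hd : ∀ a, 0 ≤ d a) (D : ℝ) :
    sSup { e : ℝ | ∃ (k : ℕ) (pu : Xr × Xh → Fin k → ℝ) (g : Fin k → Xhat),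
        (∀ a, IsPMF (pu a)) ∧
        (∑ x : Xr × Xh, ∑ u : Fin k, p x * pu x u * d (x.1, g u)) ≤ D ∧
        e = condH2 (fun q : Xh × Fin k => ∑ xr : Xr, p (xr, q.1) * pu (xr, q.1) q.2) } =
      sSup { e : ℝ | ∃ (w : Xr × Xh → Xhat → ℝ),
        (∀ a, IsPMF (w a)) ∧
        (∑ x : Xr × Xh, ∑ y : Xhat, p x * w x y * d (x.1, y)) ≤ D ∧
        e = condH2 (fun q : Xh × Xhat => ∑ xr : Xr, p (xr, q.1) * w (xr, q.1) q.2) } := by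
  classical
  apply csSup_eq_csSup_of_forall_exists_le
  · rintro x ⟨k, pu, g, hpu, hD, rfl⟩
    refine ⟨_, ⟨fun x y => ∑ u, if g u = y then pu x u else 0, ?_, ?_, rfl⟩, ?_⟩
    · intro a
      refine ⟨fun y => Finset.sum_nonneg fun u _ => ?_, ?_⟩
      · split_ifs
        · exact (hpu a).1 u
        · exact le_rfl
      · have := sum_push g (pu a) (fun _ => 1)
        simp only [mul_one] at this
        rw [← (hpu a).2, ← this]
    · refine le_trans (le_of_eq (Finset.sum_congr rfl fun x _ => ?_)) hD
      have := sum_push g (pu x) (fun y => d (x.1, y))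
      simp only [mul_assoc, ← Finset.mul_sum]
      rw [← this]
    · refine le_trans (condH2_push g _ fun q => Finset.sum_nonneg fun xr _ =>
        mul_nonneg (hp.1 _) ((hpu _).1 _)) (le_of_eq ?_)
      congr 1
      funext q
      simp only [Finset.mul_sum]
      rw [Finset.sum_comm]
      refine Finset.sum_congr rfl fun u _ => ?_
      split_ifs <;> simp
  · rintro x ⟨w, hw, hD, rfl⟩
    let e := (Fintype.equivFin Xhat).symm
    refine ⟨_, ⟨Fintype.card Xhat, fun x u => w x (e u), e, ?_, ?_, rfl⟩, ?_⟩
    · intro a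
      exact ⟨fun u => (hw a).1 _, (e.sum_comp (w a)).trans (hw a).2⟩
    · refine le_trans (le_of_eq (Finset.sum_congr rfl fun x _ => ?_)) hD
      exact e.sum_comp (fun y => p x * w x y * d (x.1, y))
    · exact (condH2_equiv e
        (fun q : Xh × Xhat => ∑ xr : Xr, p (xr, q.1) * w (xr, q.1) q.2)).ge
end

section
/- Maximal equivocation for Hamming distortion (optimality of reverse waterfilling): let 𝒳, p, λ, S, D and the pmf q and channel w be as in the reverse-waterfilling construction, with the marginal consistency condition Σ_{x̂} q(x̂) w(x | x̂) = p(x) for all x and the row normalization (1 − D) + (|S| − 1)λ + Σ_{x ∉ S} p(x) = 1. Then for every joint pmf on 𝒳 × 𝒳 whose X-marginal is p and which satisfies Pr[X ≠ X̂] ≤ D, the conditional entropy satisfies H(X | X̂) ≤ −(1 − D) log(1 − D) − (|S| − 1) λ log λ − Σ_{x ∉ S} p(x) log p(x); i.e., the reverse-waterfilling channel maximizes the equivocation H(X | X̂) (equivalently, minimizes I(X ; X̂)) among all channels meeting the Hamming-distortion constraint D. -/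
open scoped BigOperators

/-- Maximal equivocation for Hamming distortion (optimality of reverse waterfilling):
with the reverse-waterfilling construction (`S = {x : p(x) > λ}` nonempty, `D ∈ (0,1)`,
output pmf `q`, test channel `w`, marginal consistency and row normalization as stated),
every joint pmf `π(x, xhat)` on `𝒳 × 𝒳` whose `X`-marginal is `p` and which satisfies
`Pr[X ≠ X̂] ≤ D` has conditional entropy
`H(X | X̂) ≤ -(1-D) log(1-D) - (|S|-1) λ log λ - Σ_{x ∉ S} p(x) log p(x)`; i.e., the
reverse-waterfilling channel maximizes the equivocation among all channels meeting the
Hamming-distortion constraint `D`. -/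
theorem reverse_waterfilling_maximizes_equivocation {𝒳 : Type}
    [Fintype 𝒳] [DecidableEq 𝒳] [Nonempty 𝒳]
    (p : 𝒳 → ℝ) (hp : IsPMF p)
    (lam : ℝ) (hlam : 0 < lam)
    (S : Finset 𝒳) (hSdef : S = Finset.univ.filter fun x => lam < p x)
    (hSne : S.Nonempty)
    (D : ℝ) (hD : D ∈ Set.Ioo (0 : ℝ) 1)
    (hrow : (1 - D) + ((S.card : ℝ) - 1) * lam + ∑ x ∈ Finset.univ \ S, p x = 1)
    (q : 𝒳 → ℝ)
    (hq : q = fun xhat => if xhat ∈ S then (p xhat - lam) / (∑ x ∈ S, (p x - lam)) else 0)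
    (w : 𝒳 → 𝒳 → ℝ)
    (hw : w = fun xhat x => if x ∈ S then (if x = xhat then 1 - D else lam) else p x)
    (hmarg : ∀ x, (∑ xhat, q xhat * w xhat x) = p x)
    -- an arbitrary competing joint pmf `π (x, xhat)` of `(X, X̂)`
    (π : 𝒳 × 𝒳 → ℝ) (hπ : IsPMF π)
    (hπmarg : ∀ x, (∑ xhat, π (x, xhat)) = p x)
    (hπdist : (∑ y : 𝒳 × 𝒳, if y.1 ≠ y.2 then π y else 0) ≤ D) :
    condH2 π ≤
      -(1 - D) * Real.logb 2 (1 - D) - ((S.card : ℝ) - 1) * lam * Real.logb 2 lam -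
        ∑ x ∈ Finset.univ \ S, p x * Real.logb 2 (p x) := by
  obtain ⟨hπ0, hπ1⟩ := hπ
  obtain ⟨hp0, hp1⟩ := hp
  obtain ⟨hD0, hD1⟩ := hD
  clear hmarg hw hq
  have hS : ∀ x, x ∈ S ↔ lam < p x := by intro x; simp [hSdef]
  have hsplit : ∀ f : 𝒳 → ℝ, ∑ x, f x = ∑ x ∈ S, f x + ∑ x ∈ Finset.univ \ S, f x := by
    intro f
    rw [add_comm]
    exact (Finset.sum_sdiff (Finset.subset_univ S)).symm
  have hpS := hsplit p
  have hcard : (S.card : ℝ) * lam ≤ ∑ x ∈ S, p x := by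
    rw [← nsmul_eq_mul]
    exact Finset.card_nsmul_le_sum _ _ _ (fun x hx => ((hS x).1 hx).le)
  have hlamD : lam ≤ 1 - D := by linarith
  have hDpos : 0 < 1 - D := by linarith
  set m : 𝒳 → ℝ := fun x => if x ∈ S then lam else p x with hm
  have hm0 : ∀ x, 0 ≤ m x := by
    intro x; simp only [hm]; split_ifs; exacts [hlam.le, hp0 x]
  have hmlam : ∀ x, m x ≤ lam := by
    intro x; simp only [hm]; split_ifs with h
    · exact le_rfl
    · exact not_lt.1 (fun h' => h ((hS x).2 h'))
  have hmpos : ∀ x, 0 < p x → 0 < m x := by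
    intro x hx; simp only [hm]; split_ifs; exacts [hlam, hx]
  have hsumS : ∀ f g : 𝒳 → ℝ, ∑ x ∈ S, (if x ∈ S then f x else g x) = ∑ x ∈ S, f x := by
    intro f g
    exact Finset.sum_congr rfl (fun x hx => if_pos hx)
  have hsumT : ∀ f g : 𝒳 → ℝ, ∑ x ∈ Finset.univ \ S, (if x ∈ S then f x else g x)
      = ∑ x ∈ Finset.univ \ S, g x := by
    intro f g
    exact Finset.sum_congr rfl (fun x hx => if_neg (Finset.mem_sdiff.1 hx).2)
  have hmsum : ∑ x, m x = D + lam := by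
    rw [hsplit m, hm, hsumS (fun _ => lam) p, hsumT (fun _ => lam) p, Finset.sum_const, nsmul_eq_mul]
    linarith
  set K : ℝ := (1 - D) / lam with hK
  have hK1 : 1 ≤ K := by rw [hK, le_div_iff₀ hlam]; linarith
  have hKlam : lam * K = 1 - D := by rw [hK]; field_simp
  set v : 𝒳 → 𝒳 → ℝ := fun x y => m x * (if x = y then K else 1) with hv
  have hv0 : ∀ x y, 0 ≤ v x y := by
    intro x y; simp only [hv]; apply mul_nonneg (hm0 x); split_ifs <;> linarith
  have hvsum : ∀ y, ∑ x, v x y ≤ 1 := by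
    intro y
    have h1 : ∀ x, v x y = m x + (if x = y then m x * (K - 1) else 0) := by
      intro x; simp only [hv]; split_ifs <;> ring
    simp only [h1, Finset.sum_add_distrib, Finset.sum_ite_eq', Finset.mem_univ, if_true, hmsum]
    nlinarith [hmlam y]
  set r : 𝒳 → ℝ := fun y => ∑ x, π (x, y) with hr
  have hr0 : ∀ y, 0 ≤ r y := fun y => Finset.sum_nonneg (fun x _ => hπ0 _)
  have hle : ∀ x y, π (x, y) ≤ r y := fun x y =>
    Finset.single_le_sum (f := fun x => π (x, y)) (fun x _ => hπ0 _) (Finset.mem_univ x)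
  have hlep : ∀ x y, π (x, y) ≤ p x := fun x y => by
    rw [← hπmarg x]
    exact Finset.single_le_sum (f := fun y => π (x, y)) (fun y _ => hπ0 _) (Finset.mem_univ y)
  have hterm : ∀ x y, π (x, y) * Real.log (r y) - π (x, y) * Real.log (π (x, y))
      ≤ r y * v x y - π (x, y) - π (x, y) * Real.log (m x)
        - (if x = y then π (x, y) else 0) * Real.log K := by
    intro x y
    rcases (hπ0 (x, y)).eq_or_lt with h | h
    · rw [← h]; simp; exact mul_nonneg (hr0 y) (hv0 x y)
    · have hry : 0 < r y := h.trans_le (hle x y)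
      have hmx : 0 < m x := hmpos x (h.trans_le (hlep x y))
      have hK0 : 0 < K := by linarith
      have hvx : 0 < v x y := by
        simp only [hv]; apply mul_pos hmx; split_ifs <;> linarith
      have hlv : π (x, y) * Real.log (v x y) = π (x, y) * Real.log (m x)
          + (if x = y then π (x, y) else 0) * Real.log K := by
        simp only [hv]; split_ifs
        · rw [Real.log_mul hmx.ne' hK0.ne']; ring
        · simp
      have hl := Real.log_le_sub_one_of_pos (div_pos (mul_pos hry hvx) h)
      rw [Real.log_div (mul_pos hry hvx).ne' h.ne', Real.log_mul hry.ne' hvx.ne'] at hl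
      have hl2 := mul_le_mul_of_nonneg_left hl h.le
      have : π (x, y) * (r y * v x y / π (x, y) - 1) = r y * v x y - π (x, y) := by
        field_simp
      rw [this] at hl2
      linarith
  have hsum : ∑ x, ∑ y, (π (x, y) * Real.log (r y) - π (x, y) * Real.log (π (x, y)))
      ≤ ∑ x, ∑ y, (r y * v x y - π (x, y) - π (x, y) * Real.log (m x)
        - (if x = y then π (x, y) else 0) * Real.log K) :=
    Finset.sum_le_sum (fun x _ => Finset.sum_le_sum (fun y _ => hterm x y))
  simp only [Finset.sum_sub_distrib] at hsum
  have e1 : ∑ x, ∑ y, π (x, y) * Real.log (r y) = ∑ y, r y * Real.log (r y) := by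
    rw [Finset.sum_comm]
    refine Finset.sum_congr rfl (fun y _ => ?_)
    rw [← Finset.sum_mul]
  have e2 : ∑ x, ∑ y, π (x, y) = 1 := by rw [← hπ1, Fintype.sum_prod_type]
  have e3 : ∑ x, ∑ y, r y * v x y ≤ 1 := by
    rw [Finset.sum_comm]
    calc ∑ y, ∑ x, r y * v x y = ∑ y, r y * ∑ x, v x y := by simp only [Finset.mul_sum]
      _ ≤ ∑ y, r y := Finset.sum_le_sum (fun y _ => by nlinarith [hr0 y, hvsum y])
      _ = 1 := by rw [← e2, Finset.sum_comm]
  have e4 : ∑ x, ∑ y, π (x, y) * Real.log (m x) = (∑ x ∈ S, p x) * Real.log lam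
      + ∑ x ∈ Finset.univ \ S, p x * Real.log (p x) := by
    have h1 : ∀ x, ∑ y, π (x, y) * Real.log (m x)
        = if x ∈ S then p x * Real.log lam else p x * Real.log (p x) := by
      intro x
      rw [← Finset.sum_mul, hπmarg]
      simp only [hm]; split_ifs <;> rfl
    simp only [h1]
    rw [hsplit, hsumS (fun x => p x * Real.log lam) (fun x => p x * Real.log (p x)),
      hsumT (fun x => p x * Real.log lam) (fun x => p x * Real.log (p x)), Finset.sum_mul]
  have e5 : 1 - D ≤ ∑ x, ∑ y, (if x = y then π (x, y) else 0) := by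
    rw [Fintype.sum_prod_type] at hπdist
    have : ∑ x, ∑ y, π (x, y) = ∑ x, ∑ y, (if x ≠ y then π (x, y) else 0)
        + ∑ x, ∑ y, (if x = y then π (x, y) else 0) := by
      simp only [← Finset.sum_add_distrib]
      refine Finset.sum_congr rfl (fun x _ => Finset.sum_congr rfl (fun y _ => ?_))
      by_cases h : x = y <;> simp [h]
    simp only at hπdist
    linarith
  have e6 : (1 - D) * Real.log K
      ≤ ∑ x, ∑ y, (if x = y then π (x, y) else 0) * Real.log K := by
    simp only [← Finset.sum_mul]
    exact mul_le_mul_of_nonneg_right e5 (Real.log_nonneg hK1)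
  have e7 : Real.log K = Real.log (1 - D) - Real.log lam := Real.log_div hDpos.ne' hlam.ne'
  have e8 : ∑ x ∈ S, p x = (1 - D) + ((S.card : ℝ) - 1) * lam := by linarith
  have key : -∑ x, ∑ y, π (x, y) * Real.log (π (x, y)) + ∑ y, r y * Real.log (r y)
      ≤ -(1 - D) * Real.log (1 - D) - ((S.card : ℝ) - 1) * lam * Real.log lam
        - ∑ x ∈ Finset.univ \ S, p x * Real.log (p x) := by
    rw [e7] at e6
    rw [e8] at e4
    rw [e7] at hsum
    linarith
  have hfin := div_le_div_of_nonneg_right key (Real.log_nonneg (one_le_two : (1:ℝ) ≤ 2))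
  simp only [condH2, H2, Real.logb, ← mul_div_assoc, ← Finset.sum_div, Fintype.sum_prod_type]
  refine le_trans (le_of_eq ?_) (hfin.trans (le_of_eq ?_)) <;> ring
end

section
/- The Laplace mechanism guarantees ε-differential privacy: let ε > 0 and Δ > 0, and for a ∈ ℝ let μ_a denote the probability measure on ℝ with density z ↦ (ε / (2Δ)) · exp(−ε |z − a| / Δ) with respect to Lebesgue measure (the output distribution of the mechanism that adds Lap(Δ/ε) noise to a query answer a). Then for all a, b ∈ ℝ with |a − b| ≤ Δ and every Borel set S ⊆ ℝ, μ_a(S) ≤ exp(ε) · μ_b(S). -/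
open MeasureTheory

/-- The output distribution of the Laplace mechanism on query answer `a`: the
probability measure on `ℝ` with Lebesgue density
`z ↦ (ε / (2Δ)) · exp(-ε |z - a| / Δ)`, i.e. `a` plus `Lap(Δ/ε)` noise. -/
noncomputable def laplaceMechanism (ε Δ a : ℝ) : Measure ℝ :=
  volume.withDensity fun z => ENNReal.ofReal (ε / (2 * Δ) * Real.exp (-(ε * |z - a|) / Δ))

/-- The Laplace mechanism guarantees `ε`-differential privacy: for `ε > 0`, `Δ > 0`,
any query answers `a, b` with `|a - b| ≤ Δ` (Δ being the global sensitivity), and every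
Borel set `S ⊆ ℝ`, `μ_a(S) ≤ exp(ε) · μ_b(S)`. -/
theorem laplaceMechanism_differential_privacy
    (ε Δ : ℝ) (hε : 0 < ε) (hΔ : 0 < Δ)
    (a b : ℝ) (hab : |a - b| ≤ Δ)
    (S : Set ℝ) (hS : MeasurableSet S) :
    laplaceMechanism ε Δ a S ≤ ENNReal.ofReal (Real.exp ε) * laplaceMechanism ε Δ b S := by
  unfold laplaceMechanism
  rw [withDensity_apply _ hS, withDensity_apply _ hS,
    ← lintegral_const_mul' _ _ ENNReal.ofReal_ne_top]
  refine lintegral_mono fun z => ?_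
  rw [← ENNReal.ofReal_mul (Real.exp_pos ε).le]
  apply ENNReal.ofReal_le_ofReal
  have hc : 0 ≤ ε / (2 * Δ) := by positivity
  have htri : |z - b| ≤ |z - a| + Δ := (abs_sub_le z a b).trans (by linarith)
  have hexp : -(ε * |z - a|) / Δ ≤ ε + -(ε * |z - b|) / Δ := by
    have h : ε + -(ε * |z - b|) / Δ = (ε * Δ + -(ε * |z - b|)) / Δ := by
      field_simp
    rw [h]
    apply div_le_div_of_nonneg_right _ hΔ.le
    nlinarith [mul_le_mul_of_nonneg_left htri hε.le]
  calc ε / (2 * Δ) * Real.exp (-(ε * |z - a|) / Δ)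
      ≤ ε / (2 * Δ) * Real.exp (ε + -(ε * |z - b|) / Δ) :=
        mul_le_mul_of_nonneg_left (Real.exp_le_exp.mpr hexp) hc
    _ = Real.exp ε * (ε / (2 * Δ) * Real.exp (-(ε * |z - b|) / Δ)) := by
        rw [Real.exp_add]; ring
end

section
/- Single-letterization of the rate (Wyner–Ziv-type converse step): let (X_{r,i}, X_{h,i}, Z_i), 1 ≤ i ≤ n, be i.i.d. triples of finite-valued random variables, and let W be a function of (X_r^n, X_h^n) taking at most M values. Then log₂ M ≥ Σ_{i=1}^n [ I(X_{r,i}, X_{h,i} ; U_i) − I(Z_i ; U_i) ], where U_i = (W, Z_1, …, Z_{i−1}, Z_{i+1}, …, Z_n). -/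
open scoped BigOperators

/-- Joint pmf of `((X_{r,i}, X_{h,i}), U_i)` where
`U_i = (W, Z_1, …, Z_{i-1}, Z_{i+1}, …, Z_n)`, the triples `(X_{r,j}, X_{h,j}, Z_j)` are
i.i.d. with common pmf `p` and `W = F(X_r^n, X_h^n)` takes values in `Fin M`. -/
noncomputable def jointSourceAux {Xr Xh Z : Type}
    [Fintype Xr] [Fintype Xh] [Fintype Z] [DecidableEq Xr] [DecidableEq Xh]
    (p : Xr × Xh × Z → ℝ) (n M : ℕ) (F : (Fin n → Xr × Xh) → Fin M) (i : Fin n) :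
    (Xr × Xh) × (Fin M × ({j : Fin n // j ≠ i} → Z)) → ℝ :=
  fun q => ∑ xr : Fin n → Xr, ∑ xh : Fin n → Xh, ∑ zi : Z,
    if xr i = q.1.1 ∧ xh i = q.1.2 ∧ F (fun j => (xr j, xh j)) = q.2.1 then
      ∏ j, p (xr j, xh j, if h : j = i then zi else q.2.2 ⟨j, h⟩)
    else 0

/-- Joint pmf of `(Z_i, U_i)` where `U_i = (W, Z_1, …, Z_{i-1}, Z_{i+1}, …, Z_n)`, the
triples `(X_{r,j}, X_{h,j}, Z_j)` are i.i.d. with common pmf `p` and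
`W = F(X_r^n, X_h^n)` takes values in `Fin M`. -/
noncomputable def jointSideAux {Xr Xh Z : Type}
    [Fintype Xr] [Fintype Xh] [Fintype Z]
    (p : Xr × Xh × Z → ℝ) (n M : ℕ) (F : (Fin n → Xr × Xh) → Fin M) (i : Fin n) :
    Z × (Fin M × ({j : Fin n // j ≠ i} → Z)) → ℝ :=
  fun q => ∑ xr : Fin n → Xr, ∑ xh : Fin n → Xh,
    if F (fun j => (xr j, xh j)) = q.2.1 then
      ∏ j, p (xr j, xh j, if h : j = i then q.1 else q.2.2 ⟨j, h⟩)
    else 0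

open Classical in
/-- Pushforward of a weight `P` under `f`. -/
noncomputable def lawOf {Ω A : Type} [Fintype Ω] (P : Ω → ℝ) (f : Ω → A) (a : A) : ℝ :=
  ∑ ω, if f ω = a then P ω else 0

lemma H2_lawOf {Ω A : Type} [Fintype Ω] [Fintype A] (P : Ω → ℝ) (f : Ω → A) :
    H2 (lawOf P f) = -∑ ω, P ω * Real.logb 2 (lawOf P f (f ω)) := by
  classical
  unfold H2
  congr 1
  have h : ∀ a, lawOf P f a * Real.logb 2 (lawOf P f a)
      = ∑ ω, if f ω = a then P ω * Real.logb 2 (lawOf P f (f ω)) else 0 := by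
    intro a
    generalize hL : Real.logb 2 (lawOf P f a) = L
    rw [lawOf, Finset.sum_mul]
    refine Finset.sum_congr rfl fun ω _ => ?_
    by_cases hω : f ω = a <;> simp [hω, hL]
  simp_rw [h]
  rw [Finset.sum_comm]
  simp

lemma lawOf_fst {Ω A B : Type} [Fintype Ω] [Fintype B] (P : Ω → ℝ) (h : Ω → A × B) :
    (fun a => ∑ b, lawOf P h (a, b)) = lawOf P (fun ω => (h ω).1) := by
  classical
  funext a
  unfold lawOf
  rw [Finset.sum_comm]
  refine Finset.sum_congr rfl fun ω _ => ?_
  by_cases hω : (h ω).1 = a <;> simp [hω, Prod.ext_iff]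

lemma lawOf_snd {Ω A B : Type} [Fintype Ω] [Fintype A] (P : Ω → ℝ) (h : Ω → A × B) :
    (fun b => ∑ a, lawOf P h (a, b)) = lawOf P (fun ω => (h ω).2) := by
  classical
  funext a
  unfold lawOf
  rw [Finset.sum_comm]
  refine Finset.sum_congr rfl fun ω _ => ?_
  by_cases hω : (h ω).2 = a <;> simp [hω, Prod.ext_iff]

lemma MI2_lawOf {Ω A B : Type} [Fintype Ω] [Fintype A] [Fintype B] (P : Ω → ℝ)
    (h : Ω → A × B) :
    MI2 (lawOf P h) = ∑ ω, P ω * (Real.logb 2 (lawOf P h (h ω))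
      - Real.logb 2 (lawOf P (fun ω => (h ω).1) (h ω).1)
      - Real.logb 2 (lawOf P (fun ω => (h ω).2) (h ω).2)) := by
  unfold MI2
  rw [lawOf_fst, lawOf_snd, H2_lawOf, H2_lawOf, H2_lawOf]
  simp only [mul_sub, Finset.sum_sub_distrib]
  ring

lemma lawOf_pos {Ω A : Type} [Fintype Ω] (P : Ω → ℝ) (hP : ∀ ω, 0 ≤ P ω) (f : Ω → A)
    (ω : Ω) (hω : 0 < P ω) : 0 < lawOf P f (f ω) := by
  classical
  unfold lawOf
  refine Finset.sum_pos' (fun ω' _ => ?_) ⟨ω, Finset.mem_univ _, by simpa using hω⟩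
  split_ifs <;> simp [hP]

lemma sum_restrict {n : ℕ} {Z : Type} [Fintype Z] (i : Fin n)
    (z' : {j : Fin n // j ≠ i} → Z) (g : (Fin n → Z) → ℝ)
    [DecidablePred fun z : Fin n → Z => (fun j : {j : Fin n // j ≠ i} => z j) = z'] :
    (∑ z : Fin n → Z, if (fun j : {j : Fin n // j ≠ i} => z j) = z' then g z else 0)
      = ∑ t, g (fun j => if h : j = i then t else z' ⟨j, h⟩) := by
  rw [← Finset.sum_filter]
  refine Finset.sum_bij' (fun z _ => z i)
    (fun t _ => fun j => if h : j = i then t else z' ⟨j, h⟩) ?_ ?_ ?_ ?_ ?_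
  · simp
  · intro t _
    simp only [Finset.mem_filter, Finset.mem_univ, true_and]
    funext j
    simp [j.2]
  · intro z hz
    simp only [Finset.mem_filter, Finset.mem_univ, true_and] at hz
    subst hz
    funext j
    by_cases h : j = i
    · subst h; simp
    · simp [h]
  · simp
  · intro z hz
    simp only [Finset.mem_filter, Finset.mem_univ, true_and] at hz
    subst hz
    congr 1
    funext j
    by_cases h : j = i
    · subst h; simp
    · simp [h]

section core
variable {X Z : Type} [Fintype X] [Fintype Z] {n M : ℕ}

/-- Product law. -/
def prodLaw (p : X → Z → ℝ) (ω : (Fin n → X) × (Fin n → Z)) : ℝ := ∏ j, p (ω.1 j) (ω.2 j)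

/-- source map -/
def srcMap (F : (Fin n → X) → Fin M) (i : Fin n) (ω : (Fin n → X) × (Fin n → Z)) :
    X × (Fin M × ({j : Fin n // j ≠ i} → Z)) := (ω.1 i, (F ω.1, fun j => ω.2 j))

/-- side map -/
def sideMap (F : (Fin n → X) → Fin M) (i : Fin n) (ω : (Fin n → X) × (Fin n → Z)) :
    Z × (Fin M × ({j : Fin n // j ≠ i} → Z)) := (ω.2 i, (F ω.1, fun j => ω.2 j))

open Classical in
/-- joint weight of `x i = a`, `W = w`, `Z = z`. -/
noncomputable def wA (p : X → Z → ℝ) (F : (Fin n → X) → Fin M) (i : Fin n) (a : X)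
    (w : Fin M) (z : Fin n → Z) : ℝ :=
  ∑ x : Fin n → X, if x i = a ∧ F x = w then prodLaw p (x, z) else 0

open Classical in
/-- joint weight of `W = w`, `Z = z`. -/
noncomputable def wC (p : X → Z → ℝ) (F : (Fin n → X) → Fin M)
    (w : Fin M) (z : Fin n → Z) : ℝ :=
  ∑ x : Fin n → X, if F x = w then prodLaw p (x, z) else 0

lemma sum_wA (p : X → Z → ℝ) (F : (Fin n → X) → Fin M) (i : Fin n) (w : Fin M)
    (z : Fin n → Z) : ∑ a, wA p F i a w z = wC p F w z := by
  classical
  unfold wA wC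
  rw [Finset.sum_comm]
  refine Finset.sum_congr rfl fun x _ => ?_
  by_cases h : F x = w <;> simp [h]

lemma lawOf_src (p : X → Z → ℝ) (F : (Fin n → X) → Fin M) (i : Fin n)
    (q : X × (Fin M × ({j : Fin n // j ≠ i} → Z))) :
    lawOf (prodLaw p) (srcMap F i) q
      = ∑ t, wA p F i q.1 q.2.1 (fun j => if h : j = i then t else q.2.2 ⟨j, h⟩) := by
  classical
  unfold lawOf wA
  rw [Fintype.sum_prod_type, Finset.sum_comm]
  rw [← sum_restrict i q.2.2 (fun z => ∑ x : Fin n → X,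
    if x i = q.1 ∧ F x = q.2.1 then prodLaw p (x, z) else 0)]
  refine Finset.sum_congr rfl fun z _ => ?_
  by_cases h : (fun j : {j : Fin n // j ≠ i} => z j) = q.2.2
  · simp only [srcMap, h, Prod.ext_iff, and_true, if_true]
  · simp only [srcMap, h, Prod.ext_iff, and_false, if_false, Finset.sum_const_zero]

lemma lawOf_side (p : X → Z → ℝ) (F : (Fin n → X) → Fin M) (i : Fin n)
    (q : Z × (Fin M × ({j : Fin n // j ≠ i} → Z))) :
    lawOf (prodLaw p) (sideMap F i) q
      = wC p F q.2.1 (fun j => if h : j = i then q.1 else q.2.2 ⟨j, h⟩) := by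
  classical
  unfold lawOf
  rw [Fintype.sum_prod_type, Finset.sum_comm]
  have : ∀ z : Fin n → Z, (∑ x : Fin n → X, if sideMap F i (x, z) = q then prodLaw p (x, z) else 0)
      = if (fun j : {j : Fin n // j ≠ i} => z j) = q.2.2 then
          (if z i = q.1 then wC p F q.2.1 z else 0) else 0 := by
    intro z
    by_cases h : (fun j : {j : Fin n // j ≠ i} => z j) = q.2.2
    · by_cases h2 : z i = q.1
      · simp only [sideMap, h, h2, Prod.ext_iff, and_true, true_and, if_true, wC]
      · simp only [sideMap, h2, Prod.ext_iff, false_and, if_false, Finset.sum_const_zero, ite_self]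
    · simp only [sideMap, h, Prod.ext_iff, and_false, if_false, Finset.sum_const_zero]
  refine (Finset.sum_congr rfl fun z _ => Eq.trans ?_ (this z)).trans ?_
  · refine Finset.sum_congr rfl fun x _ => ?_
    congr 1
  rw [sum_restrict i q.2.2 (fun z => if z i = q.1 then wC p F q.2.1 z else 0)]
  simp

lemma lawOf_coord (p : X → Z → ℝ) (hp1 : ∑ a, ∑ t, p a t = 1) (i : Fin n) {A : Type}
    (f : X × Z → A) (a : A) :
    lawOf (prodLaw p) (fun ω : (Fin n → X) × (Fin n → Z) => f (ω.1 i, ω.2 i)) a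
      = lawOf (fun t : X × Z => p t.1 t.2) f a := by
  classical
  unfold lawOf
  rw [← (Equiv.arrowProdEquivProdArrow (Fin n) (fun _ => X) (fun _ => Z)).sum_comp]
  have h : ∀ y : Fin n → X × Z,
      (if f (y i) = a then (∏ j, p (y j).1 (y j).2) else 0)
      = ∏ j, (fun j (t : X × Z) => if j = i then (if f t = a then p t.1 t.2 else 0)
          else p t.1 t.2) j (y j) := by
    intro y
    rw [← Finset.mul_prod_erase _ _ (Finset.mem_univ i),
      ← Finset.mul_prod_erase _ (fun j => (fun j (t : X × Z) => if j = i then (if f t = a then p t.1 t.2 else 0)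
          else p t.1 t.2) j (y j)) (Finset.mem_univ i)]
    have : ∏ j ∈ Finset.univ.erase i, (fun j (t : X × Z) => if j = i then (if f t = a then p t.1 t.2 else 0)
          else p t.1 t.2) j (y j) = ∏ j ∈ Finset.univ.erase i, p (y j).1 (y j).2 := by
      refine Finset.prod_congr rfl fun j hj => ?_
      simp [Finset.ne_of_mem_erase hj]
    rw [this]
    by_cases hh : f (y i) = a <;> simp [hh]
  have e : ∀ y : Fin n → X × Z, (if f ((Equiv.arrowProdEquivProdArrow (Fin n) (fun _ => X) (fun _ => Z) y).1 i,
      (Equiv.arrowProdEquivProdArrow (Fin n) (fun _ => X) (fun _ => Z) y).2 i) = a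
      then prodLaw p (Equiv.arrowProdEquivProdArrow (Fin n) (fun _ => X) (fun _ => Z) y) else 0)
      = (if f (y i) = a then (∏ j, p (y j).1 (y j).2) else 0) := by
    intro y; rfl
  rw [Finset.sum_congr rfl fun y _ => (e y).trans (h y), ← Fintype.piFinset_univ,
    ← Finset.prod_univ_sum (fun _ : Fin n => (Finset.univ : Finset (X × Z)))
      (fun j (t : X × Z) => if j = i then (if f t = a then p t.1 t.2 else 0) else p t.1 t.2),
    ← Finset.mul_prod_erase _ _ (Finset.mem_univ i)]
  rw [Finset.prod_eq_one, mul_one]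
  · simp
  · intro j hj
    simp [Finset.ne_of_mem_erase hj, Fintype.sum_prod_type, hp1]

lemma prodLaw_glue (p : X → Z → ℝ) (i : Fin n) (x : Fin n → X) (z : Fin n → Z) (t : Z) :
    prodLaw p (x, fun j => if j = i then t else z j) * p (x i) (z i)
      = p (x i) t * prodLaw p (x, z) := by
  unfold prodLaw
  rw [← Finset.mul_prod_erase _ _ (Finset.mem_univ i),
      ← Finset.mul_prod_erase _ (fun j => p (x j) (z j)) (Finset.mem_univ i)]
  have : ∏ j ∈ Finset.univ.erase i, p (x j) (if j = i then t else z j)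
      = ∏ j ∈ Finset.univ.erase i, p (x j) (z j) := by
    refine Finset.prod_congr rfl fun j hj => ?_
    simp [Finset.ne_of_mem_erase hj]
  simp only [this, if_true]
  ring

lemma markov_id (p : X → Z → ℝ) (F : (Fin n → X) → Fin M) (i : Fin n)
    (x : Fin n → X) (z : Fin n → Z) :
    lawOf (prodLaw p) (srcMap F i) (srcMap F i (x, z)) * p (x i) (z i)
      = (∑ t, p (x i) t) * wA p F i (x i) (F x) z := by
  classical
  rw [lawOf_src, Finset.sum_mul, Finset.sum_mul]
  refine Finset.sum_congr rfl fun t _ => ?_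
  simp only [srcMap, wA, Finset.sum_mul, Finset.mul_sum]
  refine Finset.sum_congr rfl fun y _ => ?_
  by_cases h : y i = x i ∧ F y = F x
  · have := prodLaw_glue p i y z t
    rw [h.1] at this
    simpa [h] using this
  · simp [h]

lemma core_bound (p : X → Z → ℝ) (hp0 : ∀ a t, 0 ≤ p a t) (hp1 : ∑ a, ∑ t, p a t = 1)
    (hM : 0 < M) (F : (Fin n → X) → Fin M) :
    ∑ i : Fin n, (MI2 (lawOf (prodLaw (n := n) p) (srcMap F i))
      - MI2 (lawOf (prodLaw (n := n) p) (sideMap F i))) ≤ Real.logb 2 M := by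
  classical
  have hP0 : ∀ ω : (Fin n → X) × (Fin n → Z), 0 ≤ prodLaw p ω :=
    fun ω => Finset.prod_nonneg fun j _ => hp0 _ _
  have hP1 : ∑ ω : (Fin n → X) × (Fin n → Z), prodLaw p ω = 1 := by
    rw [← (Equiv.arrowProdEquivProdArrow (Fin n) (fun _ => X) (fun _ => Z)).sum_comp]
    have := (Finset.prod_univ_sum (fun _ : Fin n => (Finset.univ : Finset (X × Z)))
      (fun _ t => p t.1 t.2)).symm
    rw [Fintype.piFinset_univ] at this
    refine this.trans ?_
    simp [Fintype.sum_prod_type, hp1]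
  have hA0 : ∀ i a w z, 0 ≤ wA p F i a w z := fun i a w z =>
    Finset.sum_nonneg fun x _ => by split_ifs <;> simp [hP0]
  have hC0 : ∀ w z, 0 ≤ wC p F w z := fun w z =>
    Finset.sum_nonneg fun x _ => by split_ifs <;> simp [hP0]
  set pz : Z → ℝ := fun t => ∑ a, p a t with hpz
  have hpz0 : ∀ t, 0 ≤ pz t := fun t => Finset.sum_nonneg fun a _ => hp0 _ _
  have hpz1 : ∑ t, pz t = 1 := by rw [hpz, Finset.sum_comm]; exact hp1
  set Q : (Fin n → X) × (Fin n → Z) → ℝ := fun ω =>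
    (∏ i, pz (ω.2 i)) * ∏ i, (wA p F i (ω.1 i) (F ω.1) ω.2 / wC p F (F ω.1) ω.2) with hQ
  have hQ0 : ∀ ω, 0 ≤ Q ω := fun ω => mul_nonneg (Finset.prod_nonneg fun _ _ => hpz0 _)
    (Finset.prod_nonneg fun _ _ => div_nonneg (hA0 _ _ _ _) (hC0 _ _))
  have hQM : ∑ ω, Q ω ≤ M := by
    rw [Fintype.sum_prod_type, Finset.sum_comm]
    have h1 : ∀ z : Fin n → Z, ∑ x : Fin n → X, Q (x, z) ≤ (∏ i, pz (z i)) * M := by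
      intro z
      simp only [hQ, ← Finset.mul_sum]
      refine mul_le_mul_of_nonneg_left ?_ (Finset.prod_nonneg fun _ _ => hpz0 _)
      calc ∑ x : Fin n → X, ∏ i, (wA p F i (x i) (F x) z / wC p F (F x) z)
          ≤ ∑ x : Fin n → X, ∑ w, ∏ i, (wA p F i (x i) w z / wC p F w z) := by
            refine Finset.sum_le_sum fun x _ => ?_
            exact Finset.single_le_sum
              (f := fun w => ∏ i, (wA p F i (x i) w z / wC p F w z))
              (fun w _ => Finset.prod_nonneg fun _ _ => div_nonneg (hA0 _ _ _ _) (hC0 _ _))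
              (Finset.mem_univ (F x))
        _ = ∑ w, ∏ i : Fin n, ∑ a, (wA p F i a w z / wC p F w z) := by
            rw [Finset.sum_comm]
            refine Finset.sum_congr rfl fun w _ => ?_
            rw [Finset.prod_univ_sum, Fintype.piFinset_univ]
        _ ≤ ∑ w : Fin M, 1 := by
            refine Finset.sum_le_sum fun w _ => Finset.prod_le_one ?_ ?_
            · exact fun i _ => Finset.sum_nonneg fun a _ => div_nonneg (hA0 _ _ _ _) (hC0 _ _)
            · intro i _
              rw [← Finset.sum_div, sum_wA]
              exact div_self_le_one _
        _ = M := by simp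
    refine (Finset.sum_le_sum fun z _ => h1 z).trans ?_
    rw [← Finset.sum_mul]
    have := (Finset.prod_univ_sum (fun _ : Fin n => (Finset.univ : Finset Z))
      (fun _ t => pz t)).symm
    rw [Fintype.piFinset_univ] at this
    rw [this]
    simp [hpz1]
  have hMpos : (0 : ℝ) < M := by exact_mod_cast hM
  have hl2 : 0 < Real.log 2 := Real.log_pos (by norm_num)
  -- pointwise
  have key : ∀ ω : (Fin n → X) × (Fin n → Z),
      prodLaw p ω * ∑ i, ((Real.logb 2 (lawOf (prodLaw p) (srcMap F i) (srcMap F i ω))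
          - Real.logb 2 (lawOf (prodLaw p) (fun ω => (srcMap F i ω).1) (srcMap F i ω).1))
        - (Real.logb 2 (lawOf (prodLaw p) (sideMap F i) (sideMap F i ω))
          - Real.logb 2 (lawOf (prodLaw p) (fun ω => (sideMap F i ω).1) (sideMap F i ω).1)))
      ≤ prodLaw p ω * Real.logb 2 M + (Q ω / M - prodLaw p ω) / Real.log 2 := by
    rintro ⟨x, z⟩
    rcases (hP0 (x, z)).eq_or_lt with h0 | hpos
    · rw [← h0]
      have := hQ0 (x, z)
      simp only [zero_mul, sub_zero, zero_add]
      positivity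
    have hpj : ∀ i, 0 < p (x i) (z i) := by
      intro i
      refine (hp0 _ _).lt_of_ne fun h => hpos.ne' ?_
      exact Finset.prod_eq_zero (Finset.mem_univ i) h.symm
    have hpx : ∀ i, 0 < ∑ t, p (x i) t := fun i => (hpj i).trans_le
      (Finset.single_le_sum (f := fun t => p (x i) t) (fun t _ => hp0 _ _) (Finset.mem_univ _))
    have hpzp : ∀ i, 0 < pz (z i) := fun i => (hpj i).trans_le
      (Finset.single_le_sum (f := fun a => p a (z i)) (fun t _ => hp0 _ _) (Finset.mem_univ _))
    have hCeq : ∀ i, lawOf (prodLaw p) (sideMap F i) (sideMap F i (x, z)) = wC p F (F x) z := by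
      intro i
      rw [lawOf_side]
      congr 1
      funext j
      by_cases h : j = i
      · subst h; simp [sideMap]
      · simp [sideMap, h]
    have hC : ∀ i : Fin n, 0 < wC p F (F x) z := fun i => hCeq i ▸ lawOf_pos _ hP0 _ _ hpos
    have hS : ∀ i, 0 < lawOf (prodLaw p) (srcMap F i) (srcMap F i (x, z)) :=
      fun i => lawOf_pos _ hP0 _ _ hpos
    have hA : ∀ i, 0 < wA p F i (x i) (F x) z := by
      intro i
      have h := markov_id p F i x z
      have h2 := mul_pos (hS i) (hpj i)
      rw [h] at h2
      exact (pos_iff_pos_of_mul_pos h2).1 (hpx i)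
    have e1 : ∀ i, lawOf (prodLaw p) (fun ω : (Fin n → X) × (Fin n → Z) => (srcMap F i ω).1)
        (srcMap F i (x, z)).1 = ∑ t, p (x i) t := by
      intro i
      refine (lawOf_coord p hp1 i Prod.fst (x i)).trans ?_
      simp [lawOf, Fintype.sum_prod_type_right]
    have e2 : ∀ i, lawOf (prodLaw p) (fun ω : (Fin n → X) × (Fin n → Z) => (sideMap F i ω).1)
        (sideMap F i (x, z)).1 = pz (z i) := by
      intro i
      refine (lawOf_coord p hp1 i Prod.snd (z i)).trans ?_
      simp [lawOf, Fintype.sum_prod_type, hpz]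
    have hterm : ∀ i, ((Real.logb 2 (lawOf (prodLaw p) (srcMap F i) (srcMap F i (x, z)))
          - Real.logb 2 (lawOf (prodLaw p) (fun ω => (srcMap F i ω).1) (srcMap F i (x, z)).1))
        - (Real.logb 2 (lawOf (prodLaw p) (sideMap F i) (sideMap F i (x, z)))
          - Real.logb 2 (lawOf (prodLaw p) (fun ω => (sideMap F i ω).1) (sideMap F i (x, z)).1)))
        = Real.logb 2 (pz (z i) * (wA p F i (x i) (F x) z / wC p F (F x) z) / p (x i) (z i)) := by
      intro i
      rw [e1, e2, hCeq]
      have h := markov_id p F i x z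
      rw [← eq_div_iff (hpj i).ne'] at h
      rw [h]
      rw [Real.logb_div (mul_pos (hpx i) (hA i)).ne' (hpj i).ne',
        Real.logb_mul (hpx i).ne' (hA i).ne',
        Real.logb_div (mul_pos (hpzp i) (div_pos (hA i) (hC i))).ne' (hpj i).ne',
        Real.logb_mul (hpzp i).ne' (div_pos (hA i) (hC i)).ne',
        Real.logb_div (hA i).ne' (hC i).ne']
      ring
    rw [Finset.sum_congr rfl fun i _ => hterm i, ← Real.logb_prod]
    · rw [Finset.prod_div_distrib, Finset.prod_mul_distrib]
      change prodLaw p (x, z) * Real.logb 2 (Q (x, z) / prodLaw p (x, z)) ≤ _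
      have hQp : 0 < Q (x, z) := mul_pos (Finset.prod_pos fun i _ => hpzp i)
        (Finset.prod_pos fun i _ => div_pos (hA i) (hC i))
      have hlog := Real.log_le_sub_one_of_pos (div_pos (div_pos hQp hpos) hMpos)
      rw [Real.log_div (div_pos hQp hpos).ne' hMpos.ne'] at hlog
      have h3 : prodLaw p (x, z) * Real.log (Q (x, z) / prodLaw p (x, z))
          ≤ prodLaw p (x, z) * Real.log M + (Q (x, z) / M - prodLaw p (x, z)) := by
        have := mul_le_mul_of_nonneg_left hlog hpos.le
        have e : prodLaw p (x, z) * (Q (x, z) / prodLaw p (x, z) / M - 1)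
          = Q (x, z) / M - prodLaw p (x, z) := by field_simp
        rw [e] at this
        linarith
      have h4 := div_le_div_of_nonneg_right h3 hl2.le
      unfold Real.logb
      rw [add_div] at h4
      rw [← mul_div_assoc, ← mul_div_assoc]
      exact h4
    · intro i _
      exact (div_pos (mul_pos (hpzp i) (div_pos (hA i) (hC i))) (hpj i)).ne'
  have hsum := Finset.sum_le_sum fun ω (_ : ω ∈ Finset.univ) => key ω
  rw [Finset.sum_add_distrib, ← Finset.sum_mul, ← Finset.sum_div, Finset.sum_sub_distrib,
    ← Finset.sum_div, hP1] at hsum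
  have hle : ((∑ ω, Q ω) / M - 1) / Real.log 2 ≤ 0 := by
    refine div_nonpos_of_nonpos_of_nonneg ?_ hl2.le
    rw [sub_nonpos, div_le_one hMpos]
    exact hQM
  refine le_trans (le_of_eq ?_) (hsum.trans (by linarith))
  simp only [Finset.mul_sum]
  rw [Finset.sum_comm]
  refine Finset.sum_congr rfl fun i _ => ?_
  rw [MI2_lawOf, MI2_lawOf, ← Finset.sum_sub_distrib]
  refine Finset.sum_congr rfl fun ω _ => ?_
  have : lawOf (prodLaw p) (fun ω : (Fin n → X) × (Fin n → Z) => (srcMap F i ω).2) (srcMap F i ω).2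
    = lawOf (prodLaw p) (fun ω => (sideMap F i ω).2) (sideMap F i ω).2 := rfl
  rw [this]
  ring

end core

/-- Single-letterization of the rate (Wyner–Ziv-type converse step): for i.i.d. triples
`(X_{r,i}, X_{h,i}, Z_i)`, `1 ≤ i ≤ n`, and any function `W` of `(X_r^n, X_h^n)` taking
at most `M` values,
`log₂ M ≥ Σ_{i=1}^n [ I(X_{r,i}, X_{h,i} ; U_i) − I(Z_i ; U_i) ]` where
`U_i = (W, Z_1, …, Z_{i-1}, Z_{i+1}, …, Z_n)`. -/
theorem rate_single_letterization {Xr Xh Z : Type}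
    [Fintype Xr] [Fintype Xh] [Fintype Z]
    [Nonempty Xr] [Nonempty Xh] [Nonempty Z]
    [DecidableEq Xr] [DecidableEq Xh]
    (p : Xr × Xh × Z → ℝ) (hp : IsPMF p)
    (n M : ℕ) (hn : 0 < n) (hM : 0 < M)
    (F : (Fin n → Xr × Xh) → Fin M) :
    ∑ i : Fin n, (MI2 (jointSourceAux p n M F i) - MI2 (jointSideAux p n M F i)) ≤
      Real.logb 2 M := by
  classical
  have e1 : ∀ i, jointSourceAux p n M F i
      = lawOf (prodLaw (n := n) (fun (a : Xr × Xh) t => p (a.1, a.2, t))) (srcMap F i) := by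
    intro i
    funext q
    rw [lawOf_src]
    unfold jointSourceAux wA
    rw [Finset.sum_comm (s := (Finset.univ : Finset Z)),
      ← (Equiv.arrowProdEquivProdArrow (Fin n) (fun _ => Xr) (fun _ => Xh)).symm.sum_comp,
      Fintype.sum_prod_type]
    refine Finset.sum_congr rfl fun xr _ => Finset.sum_congr rfl fun xh _ =>
      Finset.sum_congr rfl fun t _ => ?_
    have hiff : (xr i = q.1.1 ∧ xh i = q.1.2 ∧ F (fun j => (xr j, xh j)) = q.2.1) ↔
        ((Equiv.arrowProdEquivProdArrow (Fin n) (fun _ => Xr) (fun _ => Xh)).symm (xr, xh) i = q.1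
          ∧ F ((Equiv.arrowProdEquivProdArrow (Fin n) (fun _ => Xr) (fun _ => Xh)).symm (xr, xh))
            = q.2.1) := by
      rw [← and_assoc, Prod.ext_iff]
      rfl
    by_cases hc : xr i = q.1.1 ∧ xh i = q.1.2 ∧ F (fun j => (xr j, xh j)) = q.2.1
    · rw [if_pos hc, if_pos (hiff.1 hc)]
      rfl
    · rw [if_neg hc, if_neg (fun h => hc (hiff.2 h))]
  have e2 : ∀ i, jointSideAux p n M F i
      = lawOf (prodLaw (n := n) (fun (a : Xr × Xh) t => p (a.1, a.2, t))) (sideMap F i) := by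
    intro i
    funext q
    rw [lawOf_side]
    unfold jointSideAux wC
    rw [← (Equiv.arrowProdEquivProdArrow (Fin n) (fun _ => Xr) (fun _ => Xh)).symm.sum_comp,
      Fintype.sum_prod_type]
    refine Finset.sum_congr rfl fun xr _ => Finset.sum_congr rfl fun xh _ => ?_
    exact if_congr Iff.rfl rfl rfl
  simp_rw [e1, e2]
  refine core_bound _ (fun a t => hp.1 _) ?_ hM F
  have := hp.2
  simpa [Fintype.sum_prod_type] using this
end
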